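/- Let λ > 1, let α be Diophantine, and let θ ∈ ℝ satisfy δ(α,θ) < ln λ. Let {φ_s}_{s≥1} be an orthonormal basis of ℓ²(ℤ) consisting of eigenfunctions of the almost Mathieu operator H_{λ,α,θ}, and for each s let m_s ∈ ℤ be a global maximum of |φ_s|. Then d_+ := limsup_{L→∞} #{s : |m_s| ≤ L}/(2L+1) ≤ 1 + δ(α,θ)/(2 ln λ). -/

import Mathlib

noncomputable section

open Filter Real

def distToInt (x : ℝ) : ℝ := |x - round x|

def IsDiophantine (α : ℝ) : Prop :=
  ∃ κ τ : ℝ, 0 < κ ∧ 0 < τ ∧ ∀ k : ℤ, k ≠ 0 → τ / |(k : ℝ)| ^ κ ≤ distToInt (k * α)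

def deltaPhase (α θ : ℝ) : ℝ :=
  limsup (fun n : ℤ => -Real.log (distToInt (2 * θ + n * α)) / |(n : ℝ)|) cofinite

def amoPot (lam α θ : ℝ) : ℤ → ℝ := fun n => 2 * lam * Real.cos (2 * Real.pi * (θ + n * α))

def IsEigenfunction (g : ℤ → ℝ) (E : ℝ) (φ : ℤ → ℝ) : Prop :=
  ∀ n : ℤ, φ (n + 1) + φ (n - 1) + g n * φ n = E * φ n

def deltaPot (g : ℤ → ℝ) : ℝ :=
  limsup (fun n : ℤ => -Real.log (⨆ m : ℤ, |g (n - m) - g m|) / |(n : ℝ)|) cofinite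

def matNorm (M : Matrix (Fin 2) (Fin 2) ℝ) : ℝ := ⨆ p : Fin 2 × Fin 2, |M p.1 p.2|

def transfer (g : ℤ → ℝ) (E : ℝ) : ℕ → ℤ → Matrix (Fin 2) (Fin 2) ℝ
  | 0, _ => 1
  | n + 1, k => !![E - g (k + n), -1; 1, 0] * transfer g E n k

def LyapSup (g : ℤ → ℝ) (E : ℝ) : ℝ :=
  limsup (fun n : ℕ => ⨆ k : ℤ, Real.log (matNorm (transfer g E n k)) / n) atTop

def HasSULE (g : ℤ → ℝ) : Prop :=
  ∃ (Φ : HilbertBasis ℕ ℝ (lp (fun _ : ℤ => ℝ) 2)) (ns : ℕ → ℤ) (γ : ℝ),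
    0 < γ ∧
    (∀ s : ℕ, ∃ E : ℝ, IsEigenfunction g E (fun n => Φ s n)) ∧
    ∀ ε : ℝ, 0 < ε → ∃ C : ℝ,
      ∀ (s : ℕ) (n : ℤ),
        |Φ s n| ≤ C * Real.exp (ε * |(ns s : ℝ)|) * Real.exp (-γ * |(n : ℝ) - (ns s : ℝ)|)

/-!
Normalize the eigenfunctions to have the maximum `1` at `m`. An eigenfunction can be large at a site
only if the determinants of all boxes around the site are small, and these determinants are
polynomials in the cosine of the phase at the center of the box. Lagrange interpolation on two
blocks of phases, one around the site and one around `m`, shows that an eigenfunction decays like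
`λ ^ (-|y - m|)`, except for a possible second peak at the reflected site `n₀ - m`, where `n₀` is a
resonance: a site at which `2θ + n₀α` is close to an integer. The resonance has strength at least
`e ^ (-δ|n₀|)`, so the second peak can matter only if `|n₀ - 2m| ≤ δ|n₀| / log λ`. Among the centers
`|m| ≤ L` this confines all the mass to a window of about `(2 + δ / log λ) L` sites, which does not
depend on the eigenfunction. Bessel's inequality at every site of the window then bounds the number
of eigenfunctions by the length of the window.

The real number `deltaPhase α θ` is the true `δ(α, θ)` only if the latter is finite. Otherwise
the potential has so good approximate reflection symmetries that it has no square-summable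
eigenfunctions at all.
-/

open scoped FourierTransform

namespace AlmostMathieu

/-! ### Chords and Diophantine frequencies -/

/-- The length of the chord from `1` to `e^{2πix}` in the unit circle. It is comparable to
`distToInt x`, and products of chords are values of polynomials. -/
def chord (x : ℝ) : ℝ := ‖1 - (𝐞 x : ℂ)‖

lemma chord_nonneg (x : ℝ) : 0 ≤ chord x := norm_nonneg _

lemma chord_le_two (x : ℝ) : chord x ≤ 2 := by
  have := norm_sub_le (1 : ℂ) (𝐞 x)
  rw [norm_one, Circle.norm_coe] at this
  unfold chord
  linarith

lemma chord_add_le (x y : ℝ) : chord (x + y) ≤ chord x + chord y := by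
  have h : 1 - (𝐞 (x + y) : ℂ) = (1 - 𝐞 x) + 𝐞 x * (1 - 𝐞 y) := by
    rw [AddChar.map_add_eq_mul, Circle.coe_mul]
    ring
  calc chord (x + y) ≤ ‖1 - (𝐞 x : ℂ)‖ + ‖(𝐞 x : ℂ) * (1 - 𝐞 y)‖ := by
        rw [chord, h]
        exact norm_add_le _ _
    _ = chord x + chord y := by rw [norm_mul, Circle.norm_coe, one_mul, chord, chord]

lemma chord_eq_two_mul_abs_sin (x : ℝ) : chord x = 2 * |sin (π * x)| := by
  rw [chord, Real.fourierChar_apply, norm_sub_rev, mul_comm _ Complex.I,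
    Complex.norm_exp_I_mul_ofReal_sub_one, norm_mul, Real.norm_two, Real.norm_eq_abs]
  congr 3
  ring

@[simp] lemma chord_neg (x : ℝ) : chord (-x) = chord x := by
  simp only [chord_eq_two_mul_abs_sin, mul_neg, sin_neg, abs_neg]

lemma chord_sub_le (x y : ℝ) : chord (x - y) ≤ chord x + chord y := by
  simpa [sub_eq_add_neg] using chord_add_le x (-y)

lemma chord_eq_chord_sub_round (x : ℝ) : chord x = chord (x - round x) := by
  simp only [chord_eq_two_mul_abs_sin, mul_sub, mul_comm π (round x : ℝ), sin_sub_int_mul_pi,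
    abs_mul, abs_zpow, abs_neg, abs_one, one_zpow, one_mul]

lemma distToInt_nonneg (x : ℝ) : 0 ≤ distToInt x := abs_nonneg _

lemma four_mul_distToInt_le_chord (x : ℝ) : 4 * distToInt x ≤ chord x := by
  have hround : |x - round x| ≤ 1 / 2 := abs_sub_round x
  have hconcave := Real.mul_le_sin (x := π * |x - round x|) (by positivity)
    (by nlinarith [Real.pi_pos])
  have hcancel : 2 / π * (π * |x - round x|) = 2 * |x - round x| := by field_simp
  have hsin : sin (π * |x - round x|) ≤ |sin (π * (x - round x))| := by
    rcases abs_choice (x - round x) with h | h <;> rw [h]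
    · exact le_abs_self _
    · rw [mul_neg, Real.sin_neg]
      exact neg_le_abs _
  rw [chord_eq_chord_sub_round, chord_eq_two_mul_abs_sin, distToInt]
  linarith

lemma chord_le_two_pi_mul_distToInt (x : ℝ) : chord x ≤ 2 * π * distToInt x := by
  have : |sin (π * (x - round x))| ≤ |π * (x - round x)| := Real.abs_sin_le_abs
  rw [abs_mul, abs_of_pos Real.pi_pos] at this
  rw [chord_eq_chord_sub_round, chord_eq_two_mul_abs_sin, distToInt]
  linarith

/-- The Diophantine condition with explicit constants, in terms of chords and with an integral
exponent. -/
structure IsDiophantineWith (α σ : ℝ) (κ : ℕ) : Prop where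
  pos : 0 < σ
  le_one : σ ≤ 1
  le_chord : ∀ k : ℤ, k ≠ 0 → σ / |(k : ℝ)| ^ κ ≤ chord (k * α)

lemma exists_isDiophantineWith {α : ℝ} (h : IsDiophantine α) :
    ∃ σ κ, IsDiophantineWith α σ κ := by
  obtain ⟨κ, τ, -, hτ, h⟩ := h
  refine ⟨min τ 1, ⌈κ⌉₊, lt_min hτ one_pos, min_le_right _ _, fun k hk => ?_⟩
  have hk1 : (1 : ℝ) ≤ |(k : ℝ)| := by exact_mod_cast Int.one_le_abs hk
  have hexp : |(k : ℝ)| ^ κ ≤ |(k : ℝ)| ^ ⌈κ⌉₊ := by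
    rw [← Real.rpow_natCast]
    exact Real.rpow_le_rpow_of_exponent_le hk1 (Nat.le_ceil κ)
  calc min τ 1 / |(k : ℝ)| ^ ⌈κ⌉₊ ≤ τ / |(k : ℝ)| ^ κ := by
        gcongr
        exact min_le_left _ _
    _ ≤ distToInt (k * α) := h k hk
    _ ≤ 4 * distToInt (k * α) := by linarith [distToInt_nonneg (k * α)]
    _ ≤ chord (k * α) := four_mul_distToInt_le_chord _

namespace IsDiophantineWith

variable {α σ : ℝ} {κ : ℕ}

lemma chord_pos (h : IsDiophantineWith α σ κ) {k : ℤ} (hk : k ≠ 0) : 0 < chord (k * α) :=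
  lt_of_lt_of_le (div_pos h.pos (by positivity)) (h.le_chord k hk)

end IsDiophantineWith

/-! ### Birkhoff sums of the logarithms of damped chords -/

/-- The distance from `1` to `r e^{2πix}`. For `r < 1` it is a regularization of `chord x` whose
logarithm has a bounded Birkhoff sum along Diophantine rotations. -/
def dampedChord (r x : ℝ) : ℝ := ‖1 - r * (𝐞 x : ℂ)‖

lemma norm_ofReal_mul_fourierChar {r : ℝ} (hr : 0 ≤ r) (x : ℝ) : ‖(r : ℂ) * 𝐞 x‖ = r := by
  rw [norm_mul, Circle.norm_coe, mul_one, Complex.norm_real, Real.norm_of_nonneg hr]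

lemma one_sub_le_dampedChord {r : ℝ} (hr : 0 ≤ r) (x : ℝ) : 1 - r ≤ dampedChord r x := by
  simpa only [dampedChord, norm_one, norm_ofReal_mul_fourierChar hr] using
    norm_sub_norm_le (1 : ℂ) (r * 𝐞 x)

lemma dampedChord_pos {r : ℝ} (hr0 : 0 ≤ r) (hr1 : r < 1) (x : ℝ) : 0 < dampedChord r x :=
  (sub_pos.mpr hr1).trans_le (one_sub_le_dampedChord hr0 x)

lemma dampedChord_le_two {r : ℝ} (hr0 : 0 ≤ r) (hr1 : r ≤ 1) (x : ℝ) : dampedChord r x ≤ 2 := by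
  have := norm_sub_le (1 : ℂ) (r * 𝐞 x)
  rw [norm_one, norm_ofReal_mul_fourierChar hr0] at this
  unfold dampedChord
  linarith

lemma dampedChord_le_chord_add {r : ℝ} (hr : r ≤ 1) (x : ℝ) :
    dampedChord r x ≤ chord x + (1 - r) := by
  have h : 1 - r * (𝐞 x : ℂ) = (1 - 𝐞 x) + ((1 - r : ℝ) : ℂ) * 𝐞 x := by
    push_cast
    ring
  rw [dampedChord, h, chord]
  refine (norm_add_le _ _).trans_eq ?_
  rw [norm_ofReal_mul_fourierChar (sub_nonneg.mpr hr)]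

lemma chord_le_mul_dampedChord {r : ℝ} (hr : 0 ≤ r) (x : ℝ) :
    chord x ≤ 2 / (1 + r) * dampedChord r x := by
  have hz : Complex.normSq (𝐞 x) = 1 := Circle.normSq_coe _
  rw [div_mul_eq_mul_div, le_div_iff₀ (by linarith), chord, dampedChord]
  rw [← sq_le_sq₀ (by positivity) (by positivity), mul_pow, mul_pow, Complex.sq_norm,
    Complex.sq_norm]
  set z : ℂ := (𝐞 x : ℂ)
  rw [Complex.normSq_apply] at hz
  -- `4|1 - rz|² - (1 + r)²|1 - z|² = (1 - r)²|1 + z|²` on the unit circle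
  have h : 2 ^ 2 * Complex.normSq (1 - r * z) - Complex.normSq (1 - z) * (1 + r) ^ 2
      = (1 - r) ^ 2 * Complex.normSq (1 + z) := by
    simp only [Complex.normSq_apply, Complex.sub_re, Complex.sub_im, Complex.add_re,
      Complex.add_im, Complex.one_re, Complex.one_im, Complex.re_ofReal_mul,
      Complex.im_ofReal_mul]
    linear_combination (2 * r ^ 2 - 2) * hz
  linarith [mul_nonneg (sq_nonneg (1 - r)) (Complex.normSq_nonneg (1 + z))]

lemma hasSum_log_dampedChord {r : ℝ} (hr0 : 0 ≤ r) (hr1 : r < 1) (x : ℝ) :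
    HasSum (fun m : ℕ => -((r * (𝐞 x : ℂ)) ^ m / m).re) (log (dampedChord r x)) := by
  have h := Complex.hasSum_taylorSeries_neg_log (z := r * 𝐞 x)
    ((norm_ofReal_mul_fourierChar hr0 x).trans_lt hr1)
  simpa only [Complex.neg_re, Complex.log_re, neg_neg, dampedChord] using (Complex.hasSum_re h).neg

lemma norm_geom_sum_fourierChar_mul_chord_le (x : ℝ) (N : ℕ) :
    ‖∑ j ∈ Finset.range N, (𝐞 x : ℂ) ^ j‖ * chord x ≤ 2 := by
  rw [chord, norm_sub_rev, ← norm_mul, geom_sum_mul]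
  refine (norm_sub_le _ _).trans_eq ?_
  rw [norm_pow, Circle.norm_coe, one_pow, norm_one, one_add_one_eq_two]

lemma sum_Ico_add_natCast {M : Type*} [AddCommMonoid M] (f : ℤ → M) (a : ℤ) (N : ℕ) :
    ∑ b ∈ Finset.Ico a (a + N), f b = ∑ j ∈ Finset.range N, f (a + j) := by
  simp [Int.Ico_eq_finset_map]

lemma card_Ico_add_natCast_erase_le (a c : ℤ) (N : ℕ) :
    (((Finset.Ico a (a + N)).erase c).card : ℝ) ≤ N := by
  have := Finset.card_erase_le (s := Finset.Ico a (a + N)) (a := c)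
  rw [Int.card_Ico, add_sub_cancel_left, Int.toNat_natCast] at this
  exact_mod_cast this

namespace IsDiophantineWith

variable {α σ : ℝ} {κ : ℕ}

lemma norm_geom_sum_fourierChar_le (h : IsDiophantineWith α σ κ) {m : ℕ} (hm : 0 < m) (N : ℕ) :
    ‖∑ j ∈ Finset.range N, (𝐞 (m * α) : ℂ) ^ j‖ ≤ 2 / σ * (m : ℝ) ^ κ := by
  have hσ := h.pos
  have hle : σ / (m : ℝ) ^ κ ≤ chord (m * α) := by simpa using h.le_chord m (by omega)
  calc ‖∑ j ∈ Finset.range N, (𝐞 (m * α) : ℂ) ^ j‖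
      ≤ 2 / chord (m * α) := by
        rw [le_div_iff₀ (lt_of_lt_of_le (by positivity) hle)]
        exact norm_geom_sum_fourierChar_mul_chord_le _ N
    _ ≤ 2 / (σ / (m : ℝ) ^ κ) := by gcongr
    _ = 2 / σ * (m : ℝ) ^ κ := by field_simp

lemma abs_sum_taylor_coeff_le (h : IsDiophantineWith α σ κ) {r : ℝ} (hr : 0 ≤ r) (t : ℝ)
    (N m : ℕ) :
    |∑ j ∈ Finset.range N, -((r * (𝐞 (t + j * α) : ℂ)) ^ m / m).re|
      ≤ 2 / σ * ((m : ℝ) ^ κ * r ^ m) := by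
  have hσ := h.pos
  rcases m.eq_zero_or_pos with rfl | hm
  · simp only [CharP.cast_eq_zero, div_zero, Complex.zero_re, neg_zero, Finset.sum_const_zero,
      abs_zero]
    positivity
  have hfactor : ∑ j ∈ Finset.range N, -((r * (𝐞 (t + j * α) : ℂ)) ^ m / m).re
      = -(((r * (𝐞 t : ℂ)) ^ m / m) * ∑ j ∈ Finset.range N, (𝐞 (m * α) : ℂ) ^ j).re := by
    rw [Finset.mul_sum, Complex.re_sum, Finset.sum_neg_distrib]
    congr 1
    refine Finset.sum_congr rfl fun j _ => congrArg _ ?_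
    have hpow : (𝐞 (m * α) : ℂ) ^ j = (𝐞 (j * α) : ℂ) ^ m := by
      simp only [← Circle.coe_pow, ← AddChar.map_nsmul_eq_pow, nsmul_eq_mul]
      congr 2
      ring
    rw [AddChar.map_add_eq_mul, Circle.coe_mul, hpow]
    ring
  have hm1 : (1 : ℝ) ≤ m := by exact_mod_cast hm
  rw [hfactor, abs_neg]
  calc |((r * (𝐞 t : ℂ)) ^ m / m * ∑ j ∈ Finset.range N, (𝐞 (m * α) : ℂ) ^ j).re|
      ≤ r ^ m / m * ‖∑ j ∈ Finset.range N, (𝐞 (m * α) : ℂ) ^ j‖ := by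
        refine (Complex.abs_re_le_norm _).trans_eq ?_
        rw [norm_mul, norm_div, norm_pow, norm_ofReal_mul_fourierChar hr, Complex.norm_natCast]
    _ ≤ r ^ m * (2 / σ * (m : ℝ) ^ κ) := by
        gcongr
        · exact div_le_self (by positivity) hm1
        · exact h.norm_geom_sum_fourierChar_le hm N
    _ = 2 / σ * ((m : ℝ) ^ κ * r ^ m) := by ring

lemma exists_abs_sum_log_dampedChord_le (h : IsDiophantineWith α σ κ) {r : ℝ} (hr0 : 0 ≤ r)
    (hr1 : r < 1) :
    ∃ C : ℝ, 0 ≤ C ∧ ∀ (t : ℝ) (N : ℕ),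
      |∑ j ∈ Finset.range N, log (dampedChord r (t + j * α))| ≤ C := by
  have hσ := h.pos
  have hsum : Summable (fun m : ℕ => 2 / σ * ((m : ℝ) ^ κ * r ^ m)) :=
    (summable_pow_mul_geometric_of_norm_lt_one κ
      ((Real.norm_of_nonneg hr0).trans_lt hr1)).mul_left _
  refine ⟨∑' m : ℕ, 2 / σ * ((m : ℝ) ^ κ * r ^ m), tsum_nonneg fun m => by positivity,
    fun t N => ?_⟩
  have hlog := hasSum_sum (s := Finset.range N)
    (fun j _ => hasSum_log_dampedChord hr0 hr1 (t + j * α))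
  rw [← hlog.tsum_eq, ← Real.norm_eq_abs]
  exact tsum_of_norm_bounded hsum.hasSum (h.abs_sum_taylor_coeff_le hr0 t N)

lemma exists_abs_sum_erase_log_dampedChord_le (h : IsDiophantineWith α σ κ) {r : ℝ} (hr0 : 0 ≤ r)
    (hr1 : r < 1) :
    ∃ C : ℝ, 0 ≤ C ∧ ∀ (t : ℝ) (a : ℤ) (N : ℕ) (c : ℤ),
      |∑ b ∈ (Finset.Ico a (a + N)).erase c, log (dampedChord r (t + b * α))| ≤ C := by
  obtain ⟨C, hC0, hC⟩ := h.exists_abs_sum_log_dampedChord_le hr0 hr1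
  have hlog2 : 0 ≤ log 2 := log_nonneg one_le_two
  have hlogr : log (1 - r) ≤ 0 := log_nonpos (by linarith) (by linarith)
  refine ⟨C + (log 2 - log (1 - r)), by linarith, fun t a N c => ?_⟩
  have hfull : |∑ b ∈ Finset.Ico a (a + N), log (dampedChord r (t + b * α))| ≤ C := by
    rw [sum_Ico_add_natCast]
    convert hC (t + a * α) N using 5
    push_cast
    ring
  by_cases hc : c ∈ Finset.Ico a (a + N)
  · have hsplit := Finset.add_sum_erase _ (fun b : ℤ => log (dampedChord r (t + b * α))) hc
    have hle := log_le_log (dampedChord_pos hr0 hr1 (t + c * α)) (dampedChord_le_two hr0 hr1.le _)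
    have hge := log_le_log (sub_pos.mpr hr1) (one_sub_le_dampedChord hr0 (t + c * α))
    rw [abs_le] at hfull ⊢
    constructor <;> linarith [hfull.1, hfull.2]
  · rw [Finset.erase_eq_of_notMem hc]
    linarith

lemma exists_prod_chord_le (h : IsDiophantineWith α σ κ) {ε : ℝ} (hε : 0 < ε) :
    ∃ C : ℝ, 0 ≤ C ∧ ∀ (t : ℝ) (a : ℤ) (N : ℕ) (c : ℤ),
      ∏ b ∈ (Finset.Ico a (a + N)).erase c, chord (t + b * α) ≤ exp (ε * N + C) := by
  set u := min ε (1 / 2)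
  have hu0 : 0 < u := lt_min hε (by norm_num)
  have hu1 : u ≤ 1 / 2 := min_le_right _ _
  have huε : u ≤ ε := min_le_left _ _
  have hr0 : 0 ≤ 1 - u := by linarith
  have hr1 : 1 - u < 1 := by linarith
  obtain ⟨C, hC0, hC⟩ := h.exists_abs_sum_erase_log_dampedChord_le hr0 hr1
  have hchord : ∀ x, chord x ≤ exp (u + log (dampedChord (1 - u) x)) := fun x => by
    rw [exp_add, exp_log (dampedChord_pos hr0 hr1 x)]
    refine (chord_le_mul_dampedChord hr0 x).trans ?_
    gcongr
    · exact (dampedChord_pos hr0 hr1 x).le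
    calc 2 / (1 + (1 - u)) ≤ u + 1 := by
          rw [div_le_iff₀ (by linarith)]
          nlinarith
      _ ≤ exp u := add_one_le_exp u
  refine ⟨C, hC0, fun t a N c => ?_⟩
  have hcard := card_Ico_add_natCast_erase_le a c N
  set A := (Finset.Ico a (a + N)).erase c
  calc ∏ b ∈ A, chord (t + b * α)
      ≤ ∏ b ∈ A, exp (u + log (dampedChord (1 - u) (t + b * α))) :=
        Finset.prod_le_prod (fun b _ => chord_nonneg _) (fun b _ => hchord _)
    _ = exp (A.card * u + ∑ b ∈ A, log (dampedChord (1 - u) (t + b * α))) := by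
        rw [← exp_sum, Finset.sum_add_distrib, Finset.sum_const, nsmul_eq_mul]
    _ ≤ exp (ε * N + C) := by
        rw [mul_comm]
        gcongr
        exact (abs_le.mp (hC t a N c)).2

end IsDiophantineWith

/-! ### Products of chords without the smallest factor -/

section Separation

variable {ι : Type*} [DecidableEq ι] {f : ι → ℝ}

lemma exists_sum_erase_nonpos {s : Finset ι} (hs : s.Nonempty)
    (hf : ∀ i ∈ s, ∀ j ∈ s, i ≠ j → min (f i) (f j) ≤ 0) :
    ∃ j₀ ∈ s, ∑ j ∈ s.erase j₀, f j ≤ 0 := by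
  obtain ⟨j₀, hj₀, hmax⟩ := s.exists_max_image f hs
  refine ⟨j₀, hj₀, Finset.sum_nonpos fun j hj => ?_⟩
  obtain ⟨hne, hj⟩ := Finset.mem_erase.mp hj
  simpa only [min_eq_left (hmax j hj)] using hf j hj j₀ hj₀ hne

lemma exists_sum_union_erase_le {s t : Finset ι} (hst : Disjoint s t) {i j : ι} (hi : i ∈ s)
    (hj : j ∈ t) {M : ℝ} (hM : min (f i) (f j) ≤ M) :
    ∃ j₀ ∈ s ∪ t, ∑ b ∈ (s ∪ t).erase j₀, f b
      ≤ (∑ b ∈ s.erase i, f b + ∑ b ∈ t.erase j, f b) + M := by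
  have his : i ∈ s ∪ t := Finset.mem_union_left _ hi
  have hjt : j ∈ s ∪ t := Finset.mem_union_right _ hj
  have hunion := Finset.sum_union hst (f := f)
  have hs := Finset.add_sum_erase s f hi
  have ht := Finset.add_sum_erase t f hj
  rcases min_le_iff.mp hM with hM | hM
  · exact ⟨j, hjt, by linarith [Finset.add_sum_erase (s ∪ t) f hjt]⟩
  · exact ⟨i, his, by linarith [Finset.add_sum_erase (s ∪ t) f his]⟩

end Separation

section Bisection

variable {f : ℤ → ℝ} {ε c : ℝ} {N₀ : ℕ}

lemma mul_sqrt_bisect_le (hc : 0 ≤ c) {N₁ N₂ : ℕ} (h₁₂ : N₂ ≤ 2 * N₁) (h₂₁ : N₁ ≤ 2 * N₂) :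
    c * √(N₁ + N₂ : ℕ) ≤ 10 * c * √N₁ + 10 * c * √N₂ - 10 * c * √(N₁ + N₂ : ℕ) := by
  have hpart : ∀ n : ℕ, N₁ + N₂ ≤ 3 * n → 0.55 * √(N₁ + N₂ : ℕ) ≤ √n := fun n hn => by
    apply Real.le_sqrt_of_sq_le
    rw [mul_pow, Real.sq_sqrt (by positivity)]
    have : ((N₁ + N₂ : ℕ) : ℝ) ≤ 3 * n := by exact_mod_cast hn
    norm_num1
    linarith
  nlinarith [mul_le_mul_of_nonneg_left (hpart N₁ (by omega)) hc,
    mul_le_mul_of_nonneg_left (hpart N₂ (by omega)) hc]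

/- The square-root gain absorbs the large value that survives each time two blocks are merged. -/
lemma exists_sum_Ico_erase_le_sub_sqrt (hε : 0 ≤ ε) (hc : 0 ≤ c) (hN₀ : 0 < N₀)
    (hcε : 10 * c ≤ ε * √N₀)
    (hnear : ∀ i j : ℤ, i ≠ j → |i - j| < 2 * N₀ → min (f i) (f j) ≤ 0)
    (hfar : ∀ i j : ℤ, i ≠ j → min (f i) (f j) ≤ c * √|(i : ℝ) - j|) (N : ℕ) (hN : N₀ ≤ N)
    (a : ℤ) :
    ∃ j₀ ∈ Finset.Ico a (a + N),
      ∑ j ∈ (Finset.Ico a (a + N)).erase j₀, f j ≤ ε * N - 10 * c * √N := by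
  induction N using Nat.strong_induction_on generalizing a with
  | _ N ih =>
  rcases lt_or_ge N (2 * N₀) with hlt | hge
  · obtain ⟨j₀, hj₀, hsum⟩ := exists_sum_erase_nonpos (f := f) (s := Finset.Ico a (a + N))
      ⟨a, Finset.mem_Ico.mpr (by omega)⟩ fun i hi j hj hij => hnear i j hij (by
        rw [Finset.mem_Ico] at hi hj
        rw [abs_lt]
        omega)
    refine ⟨j₀, hj₀, hsum.trans ?_⟩
    have hroot : 10 * c ≤ ε * √N := hcε.trans (by gcongr)
    nlinarith [Real.mul_self_sqrt (Nat.cast_nonneg (α := ℝ) N), Real.sqrt_nonneg (N : ℝ)]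
  · obtain ⟨N₁, N₂, rfl, h₁, h₂, h₁₂, h₂₁⟩ : ∃ N₁ N₂, N = N₁ + N₂ ∧ N₀ ≤ N₁ ∧ N₀ ≤ N₂ ∧
        N₂ ≤ 2 * N₁ ∧ N₁ ≤ 2 * N₂ := ⟨N / 2, N - N / 2, by omega⟩
    obtain ⟨j₁, hj₁, hsum₁⟩ := ih N₁ (by omega) h₁ a
    obtain ⟨j₂, hj₂, hsum₂⟩ := ih N₂ (by omega) h₂ (a + N₁)
    have hunion : Finset.Ico a (a + N₁) ∪ Finset.Ico (a + N₁) (a + N₁ + N₂)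
        = Finset.Ico a (a + (N₁ + N₂ : ℕ)) := by
      rw [Finset.Ico_union_Ico_eq_Ico (by omega) (by omega)]
      push_cast
      ring_nf
    have hmin : min (f j₁) (f j₂) ≤ c * √(N₁ + N₂ : ℕ) := by
      rw [Finset.mem_Ico] at hj₁ hj₂
      refine (hfar j₁ j₂ (by omega)).trans ?_
      gcongr
      have : |j₁ - j₂| ≤ (N₁ + N₂ : ℕ) := by
        rw [abs_le]
        push_cast
        omega
      exact_mod_cast this
    obtain ⟨j₀, hj₀, hsum⟩ :=
      exists_sum_union_erase_le (Finset.Ico_disjoint_Ico_consecutive _ _ _) hj₁ hj₂ hmin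
    rw [hunion] at hj₀ hsum
    have hmerge := mul_sqrt_bisect_le hc h₁₂ h₂₁
    push_cast at hsum hmerge hj₀ ⊢
    exact ⟨j₀, hj₀, by linarith⟩

lemma exists_sum_Ico_erase_le (hε : 0 ≤ ε) (hc : 0 ≤ c) (hN₀ : 0 < N₀) (hcε : 10 * c ≤ ε * √N₀)
    (hnear : ∀ i j : ℤ, i ≠ j → |i - j| < 2 * N₀ → min (f i) (f j) ≤ 0)
    (hfar : ∀ i j : ℤ, i ≠ j → min (f i) (f j) ≤ c * √|(i : ℝ) - j|) {N : ℕ} (hN : 0 < N)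
    (a : ℤ) :
    ∃ j₀ ∈ Finset.Ico a (a + N), ∑ j ∈ (Finset.Ico a (a + N)).erase j₀, f j ≤ ε * N := by
  rcases lt_or_ge N N₀ with hlt | hge
  · obtain ⟨j₀, hj₀, hsum⟩ := exists_sum_erase_nonpos (f := f) (s := Finset.Ico a (a + N))
      ⟨a, Finset.mem_Ico.mpr (by omega)⟩ fun i hi j hj hij => hnear i j hij (by
        rw [Finset.mem_Ico] at hi hj
        rw [abs_lt]
        omega)
    exact ⟨j₀, hj₀, hsum.trans (by positivity)⟩
  · obtain ⟨j₀, hj₀, hsum⟩ :=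
      exists_sum_Ico_erase_le_sub_sqrt hε hc hN₀ hcε hnear hfar N hge a
    have : 0 ≤ 10 * c * √N := by positivity
    exact ⟨j₀, hj₀, by linarith⟩

end Bisection

/-- The value of `-log s` where `s < ρ`, and `0` elsewhere: the part of the logarithm of a chord
that is not controlled by `dampedChord`. -/
def negLogBelow (ρ s : ℝ) : ℝ := if s < ρ then -log s else 0

lemma negLogBelow_nonneg {ρ s : ℝ} (hρ : ρ ≤ 1) (hs : 0 ≤ s) : 0 ≤ negLogBelow ρ s := by
  unfold negLogBelow
  split_ifs with h
  · linarith [log_nonpos hs (h.le.trans hρ)]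
  · exact le_rfl

lemma negLogBelow_le {ρ s b : ℝ} (hb : 0 ≤ b) (hs : exp (-b) ≤ s) : negLogBelow ρ s ≤ b := by
  unfold negLogBelow
  split_ifs with h
  · linarith [(le_log_iff_exp_le ((exp_pos _).trans_le hs)).mpr hs]
  · exact hb

lemma log_dampedChord_le {ρ r δ x : ℝ} (hr0 : 0 ≤ r) (hr1 : r < 1) (hρr : ρ ≤ r)
    (hδ : 0 ≤ δ) (hrδ : 1 - r ≤ δ * ρ) (hx : 0 < chord x) :
    log (dampedChord r x) ≤ log (chord x) + negLogBelow ρ (chord x) + δ := by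
  have hle := dampedChord_le_chord_add hr1.le x
  have hpos := dampedChord_pos hr0 hr1 x
  unfold negLogBelow
  split_ifs with h
  · linarith [log_nonpos hpos.le (by linarith)]
  · have hmul : dampedChord r x ≤ chord x * exp δ := by
      nlinarith [mul_le_mul_of_nonneg_left (add_one_le_exp δ) hx.le,
        mul_le_mul_of_nonneg_left (not_lt.mp h) hδ]
    calc log (dampedChord r x) ≤ log (chord x * exp δ) := log_le_log hpos hmul
      _ = log (chord x) + 0 + δ := by rw [log_mul hx.ne' (exp_pos _).ne', log_exp, add_zero]

lemma log_two_mul_pow_div_le {σ R : ℝ} (hσ0 : 0 < σ) (hσ1 : σ ≤ 1) (κ : ℕ) (hR : 1 ≤ R) :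
    log (2 * R ^ κ / σ) ≤ (2 * κ + log (2 / σ)) * √R := by
  have hlog : 0 ≤ log (2 / σ) := log_nonneg (by rw [le_div_iff₀ hσ0]; linarith)
  have hsqrt : 1 ≤ √R := Real.one_le_sqrt.mpr hR
  have hlogR : log R ≤ 2 * √R := by
    have := log_le_sub_one_of_pos (zero_lt_one.trans_le hsqrt)
    rw [log_sqrt (by linarith)] at this
    linarith
  rw [mul_div_right_comm, log_mul (by positivity) (by positivity), log_pow]
  nlinarith [mul_le_mul_of_nonneg_left hlogR (Nat.cast_nonneg κ : (0 : ℝ) ≤ κ)]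

namespace IsDiophantineWith

variable {α σ : ℝ} {κ : ℕ}

lemma div_two_mul_pow_le_max_chord (h : IsDiophantineWith α σ κ) (t : ℝ) {i j : ℤ} (hij : i ≠ j)
    {R : ℝ} (hR : |(i : ℝ) - j| ≤ R) :
    σ / (2 * R ^ κ) ≤ max (chord (t + i * α)) (chord (t + j * α)) := by
  have hσ := h.pos
  have hpos : 0 < |(i : ℝ) - j| := abs_pos.mpr (sub_ne_zero.mpr (by exact_mod_cast hij))
  have hdioph := h.le_chord (i - j) (sub_ne_zero.mpr hij)
  push_cast at hdioph
  have hsub : chord ((i - j) * α) ≤ chord (t + i * α) + chord (t + j * α) := by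
    convert chord_sub_le (t + i * α) (t + j * α) using 2
    ring
  have hmono : σ / R ^ κ ≤ σ / |(i : ℝ) - j| ^ κ := by gcongr
  have hhalf : σ / (2 * R ^ κ) = σ / R ^ κ / 2 := by rw [mul_comm, div_mul_eq_div_div]
  rw [hhalf]
  linarith [le_max_left (chord (t + i * α)) (chord (t + j * α)),
    le_max_right (chord (t + i * α)) (chord (t + j * α))]

lemma min_negLogBelow_le (h : IsDiophantineWith α σ κ) (ρ t : ℝ) {i j : ℤ} (hij : i ≠ j) :
    min (negLogBelow ρ (chord (t + i * α))) (negLogBelow ρ (chord (t + j * α)))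
      ≤ (2 * κ + log (2 / σ)) * √|(i : ℝ) - j| := by
  have hσ := h.pos
  have hR : 1 ≤ |(i : ℝ) - j| := by exact_mod_cast Int.one_le_abs (sub_ne_zero.mpr hij)
  have hbound := log_two_mul_pow_div_le hσ h.le_one κ hR
  have hc : 0 ≤ log (2 * |(i : ℝ) - j| ^ κ / σ) := log_nonneg (by
    rw [le_div_iff₀ hσ]
    linarith [h.le_one, one_le_pow₀ hR (n := κ)])
  have hexp : exp (-((2 * κ + log (2 / σ)) * √|(i : ℝ) - j|)) ≤ σ / (2 * |(i : ℝ) - j| ^ κ) := by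
    have hinv : log (σ / (2 * |(i : ℝ) - j| ^ κ)) = -log (2 * |(i : ℝ) - j| ^ κ / σ) := by
      rw [← log_inv, inv_div]
    rw [← log_le_log_iff (exp_pos _) (by positivity), log_exp, hinv]
    linarith
  rcases le_max_iff.mp (hexp.trans (h.div_two_mul_pow_le_max_chord t hij le_rfl)) with hle | hle
  · exact (min_le_left _ _).trans (negLogBelow_le (hc.trans hbound) hle)
  · exact (min_le_right _ _).trans (negLogBelow_le (hc.trans hbound) hle)

lemma exists_sum_erase_negLogBelow_le (h : IsDiophantineWith α σ κ) {ε : ℝ} (hε : 0 < ε) :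
    ∃ ρ : ℝ, 0 < ρ ∧ ρ < 1 ∧ ∀ (t : ℝ) {N : ℕ}, 0 < N → ∀ a : ℤ, ∃ j₀ ∈ Finset.Ico a (a + N),
      ∑ j ∈ (Finset.Ico a (a + N)).erase j₀, negLogBelow ρ (chord (t + j * α)) ≤ ε * N := by
  have hσ := h.pos
  have hlog : 0 ≤ log (2 / σ) := log_nonneg (by rw [le_div_iff₀ hσ]; linarith [h.le_one])
  set c : ℝ := 2 * κ + log (2 / σ)
  have hc : 0 ≤ c := by positivity
  obtain ⟨N₀, hN₀⟩ := exists_nat_ge ((10 * c / ε) ^ 2 + 1)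
  have hN₀1 : (1 : ℝ) ≤ N₀ := by linarith [sq_nonneg (10 * c / ε)]
  have hcε : 10 * c ≤ ε * √N₀ := by
    rw [← div_le_iff₀' hε]
    exact Real.le_sqrt_of_sq_le (by linarith)
  have hpow : (1 : ℝ) ≤ (2 * N₀ : ℝ) ^ κ := one_le_pow₀ (by linarith)
  refine ⟨σ / (2 * (2 * N₀ : ℝ) ^ κ), by positivity, ?_, fun t N hN a => ?_⟩
  · rw [div_lt_one (by positivity)]
    linarith [h.le_one]
  refine exists_sum_Ico_erase_le hε.le hc (by exact_mod_cast hN₀1) hcε (fun i j hij hlt => ?_)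
    (fun i j hij => h.min_negLogBelow_le _ t hij) hN a
  have hR : |(i : ℝ) - j| ≤ 2 * N₀ := by exact_mod_cast hlt.le
  unfold negLogBelow
  rcases le_max_iff.mp (h.div_two_mul_pow_le_max_chord t hij hR) with hle | hle
  · exact (min_le_left _ _).trans_eq (if_neg hle.not_gt)
  · exact (min_le_right _ _).trans_eq (if_neg hle.not_gt)

lemma exists_sum_negLogBelow_le (h : IsDiophantineWith α σ κ) {ε : ℝ} (hε : 0 < ε) :
    ∃ ρ : ℝ, 0 < ρ ∧ ρ < 1 ∧ ∀ (t : ℝ) (a : ℤ) (N : ℕ) (c : ℤ) (β : ℝ), 0 ≤ β →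
      (∀ b ∈ (Finset.Ico a (a + N)).erase c, exp (-β) ≤ chord (t + b * α)) →
      ∑ b ∈ (Finset.Ico a (a + N)).erase c, negLogBelow ρ (chord (t + b * α)) ≤ ε * N + β := by
  obtain ⟨ρ, hρ0, hρ1, hsep⟩ := h.exists_sum_erase_negLogBelow_le hε
  refine ⟨ρ, hρ0, hρ1, fun t a N c β hβ hlow => ?_⟩
  rcases N.eq_zero_or_pos with rfl | hN
  · simpa using hβ
  obtain ⟨j₀, hj₀, hsum⟩ := hsep t hN a
  set f : ℤ → ℝ := fun b => negLogBelow ρ (chord (t + b * α))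
  by_cases hjc : j₀ = c
  · rw [← hjc]
    linarith
  · have hj₀c : f j₀ ≤ β := negLogBelow_le hβ (hlow j₀ (Finset.mem_erase.mpr ⟨hjc, hj₀⟩))
    calc ∑ b ∈ (Finset.Ico a (a + N)).erase c, f b
        ≤ ∑ b ∈ Finset.Ico a (a + N), f b :=
          Finset.sum_le_sum_of_subset_of_nonneg (Finset.erase_subset _ _)
            fun b _ _ => negLogBelow_nonneg hρ1.le (chord_nonneg _)
      _ = f j₀ + ∑ b ∈ (Finset.Ico a (a + N)).erase j₀, f b :=
          (Finset.add_sum_erase _ f hj₀).symm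
      _ ≤ ε * N + β := by linarith

lemma exists_le_prod_chord (h : IsDiophantineWith α σ κ) {ε : ℝ} (hε : 0 < ε) :
    ∃ C : ℝ, 0 ≤ C ∧ ∀ (t : ℝ) (a : ℤ) (N : ℕ) (c : ℤ) (β : ℝ), 0 ≤ β →
      (∀ b ∈ (Finset.Ico a (a + N)).erase c, exp (-β) ≤ chord (t + b * α)) →
      exp (-(ε * N + C + β)) ≤ ∏ b ∈ (Finset.Ico a (a + N)).erase c, chord (t + b * α) := by
  obtain ⟨ρ, hρ0, hρ1, hnear⟩ := h.exists_sum_negLogBelow_le (half_pos hε)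
  set r := max (1 - ε / 2 * ρ) ρ
  have hρr : ρ ≤ r := le_max_right _ _
  have hr0 : 0 ≤ r := hρ0.le.trans hρr
  have hr1 : r < 1 := max_lt (by linarith [mul_pos (half_pos hε) hρ0]) hρ1
  have hrε : 1 - r ≤ ε / 2 * ρ := by linarith [le_max_left (1 - ε / 2 * ρ) ρ]
  obtain ⟨C, hC0, hC⟩ := h.exists_abs_sum_erase_log_dampedChord_le hr0 hr1
  refine ⟨C, hC0, fun t a N c β hβ hlow => ?_⟩
  have hcard := card_Ico_add_natCast_erase_le a c N
  have hsmall := hnear t a N c β hβ hlow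
  have hdamped := (abs_le.mp (hC t a N c)).1
  set A := (Finset.Ico a (a + N)).erase c
  have hpos : ∀ b ∈ A, 0 < chord (t + b * α) := fun b hb => (exp_pos _).trans_le (hlow b hb)
  have hsum := Finset.sum_le_sum fun b hb =>
    log_dampedChord_le hr0 hr1 hρr (half_pos hε).le hrε (hpos b hb)
  rw [Finset.sum_add_distrib, Finset.sum_add_distrib, Finset.sum_const, nsmul_eq_mul] at hsum
  rw [← exp_log (Finset.prod_pos hpos), exp_le_exp, log_prod fun b hb => (hpos b hb).ne']
  nlinarith

end IsDiophantineWith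

/-! ### Determinants of finite boxes -/

section BoxDeterminants

open Polynomial

section JacobiDet

variable {R S : Type*} [CommRing R] [CommRing S]

/-- The determinant of the `n × n` tridiagonal matrix with diagonal `v 0, …, v (n - 1)` whose
pairs of opposite off-diagonal entries all have product `c`, by expansion along the last row. -/
def jacobiDet (c : R) (v : ℕ → R) : ℕ → R
  | 0 => 1
  | 1 => v 0
  | n + 2 => v (n + 1) * jacobiDet c v (n + 1) - c * jacobiDet c v n

lemma jacobiDet_add_two (c : R) (v : ℕ → R) (n : ℕ) :
    jacobiDet c v (n + 2) = v (n + 1) * jacobiDet c v (n + 1) - c * jacobiDet c v n :=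
  rfl

lemma jacobiDet_add_two_left (c : R) (v : ℕ → R) : ∀ n : ℕ,
    jacobiDet c v (n + 2)
      = v 0 * jacobiDet c (fun j => v (j + 1)) (n + 1) - c * jacobiDet c (fun j => v (j + 2)) n
  | 0 => by simp only [jacobiDet, zero_add]; ring
  | 1 => by simp only [jacobiDet, zero_add, one_add_one_eq_two]; ring
  | n + 2 => by
      rw [jacobiDet_add_two, jacobiDet_add_two_left c v (n + 1), jacobiDet_add_two_left c v n,
        jacobiDet_add_two c (fun j => v (j + 1)) (n + 1),
        jacobiDet_add_two c (fun j => v (j + 2))]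
      ring

lemma jacobiDet_reverse (c : R) : ∀ (n : ℕ) (v w : ℕ → R),
    (∀ i j, i + j + 1 = n → w i = v j) → jacobiDet c w n = jacobiDet c v n
  | 0, _, _, _ => rfl
  | 1, _, _, h => h 0 0 rfl
  | n + 2, v, w, h => by
      rw [jacobiDet_add_two_left c v, jacobiDet, h (n + 1) 0 (by omega),
        jacobiDet_reverse c (n + 1) (fun j => v (j + 1)) w fun i j hij => h i (j + 1) (by omega),
        jacobiDet_reverse c n (fun j => v (j + 2)) w fun i j hij => h i (j + 2) (by omega)]

lemma jacobiDet_scale (x c : R) (v : ℕ → R) : ∀ n : ℕ,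
    jacobiDet (x ^ 2 * c) (fun j => x * v j) n = x ^ n * jacobiDet c v n
  | 0 => by simp only [jacobiDet, pow_zero, mul_one]
  | 1 => by simp only [jacobiDet, pow_one]
  | n + 2 => by
      rw [jacobiDet, jacobiDet, jacobiDet_scale x c v (n + 1), jacobiDet_scale x c v n]
      ring

lemma map_jacobiDet (f : R →+* S) (c : R) (v : ℕ → R) : ∀ n : ℕ,
    f (jacobiDet c v n) = jacobiDet (f c) (fun j => f (v j)) n
  | 0 => by simp only [jacobiDet, map_one]
  | 1 => by simp only [jacobiDet]
  | n + 2 => by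
      rw [jacobiDet, jacobiDet, map_sub, map_mul, map_mul, map_jacobiDet f c v (n + 1),
        map_jacobiDet f c v n]

lemma jacobiDet_zero_left (v : ℕ → R) : ∀ n : ℕ,
    jacobiDet 0 v n = ∏ j ∈ Finset.range n, v j
  | 0 => by simp only [jacobiDet, Finset.range_zero, Finset.prod_empty]
  | 1 => by simp only [jacobiDet, Finset.prod_range_one]
  | n + 2 => by
      rw [jacobiDet, jacobiDet_zero_left v (n + 1), Finset.prod_range_succ _ (n + 1)]
      ring

lemma natDegree_jacobiDet_le {c : R[X]} {v : ℕ → R[X]} {d : ℕ} (hc : c.natDegree ≤ 2 * d)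
    (hv : ∀ j, (v j).natDegree ≤ d) : ∀ n : ℕ, (jacobiDet c v n).natDegree ≤ n * d
  | 0 => by simp only [jacobiDet, natDegree_one, zero_mul, le_refl]
  | 1 => by simpa only [jacobiDet, one_mul] using hv 0
  | n + 2 => by
      have h₁ := natDegree_mul_le_of_le (hv (n + 1)) (natDegree_jacobiDet_le hc hv (n + 1))
      have h₀ := natDegree_mul_le_of_le hc (natDegree_jacobiDet_le hc hv n)
      rw [jacobiDet]
      refine natDegree_sub_le_of_le (h₁.trans_eq ?_) (h₀.trans_eq ?_) |>.trans_eq (max_self _) <;>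
        ring

lemma jacobiDet_mul_eq_add_succ {v u : ℕ → R} (hu : ∀ n, u (n + 2) = v n * u (n + 1) - u n) :
    ∀ i : ℕ, jacobiDet 1 v (i + 1) * u (i + 1) = u 0 + jacobiDet 1 v i * u (i + 2)
  | 0 => by
      rw [jacobiDet, jacobiDet, hu 0]
      ring
  | i + 1 => by
      rw [jacobiDet, hu (i + 1)]
      linear_combination jacobiDet_mul_eq_add_succ hu i

/- The Poisson formula for the Dirichlet problem on a box. -/
lemma jacobiDet_mul_solution {v u : ℕ → R} (hu : ∀ n, u (n + 2) = v n * u (n + 1) - u n) (i : ℕ) :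
    ∀ j : ℕ, jacobiDet 1 v (i + 1 + j) * u (i + 1)
      = jacobiDet 1 (fun l => v (l + (i + 1))) j * u 0 + jacobiDet 1 v i * u (i + 2 + j)
  | 0 => by
      rw [jacobiDet]
      linear_combination jacobiDet_mul_eq_add_succ hu i
  | 1 => by
      rw [show i + 1 + 1 = i + 2 by ring, jacobiDet, jacobiDet, hu (i + 1), zero_add]
      linear_combination v (i + 1) * jacobiDet_mul_eq_add_succ hu i
  | j + 2 => by
      have h₁ := jacobiDet_mul_solution hu i (j + 1)
      have h₀ := jacobiDet_mul_solution hu i j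
      have hstep := hu (i + 2 + j)
      rw [show i + 2 + j = j + 1 + (i + 1) by ring] at hstep
      rw [show i + 1 + (j + 2) = i + 1 + j + 2 by ring, jacobiDet, jacobiDet,
        show i + 2 + (j + 2) = j + 1 + (i + 1) + 2 by ring, hstep]
      rw [show i + 1 + (j + 1) = i + 1 + j + 1 by ring,
        show i + 2 + (j + 1) = j + 1 + (i + 1) + 1 by ring] at h₁
      rw [show i + 2 + j = j + 1 + (i + 1) by ring] at h₀
      rw [show i + 1 + j + 1 = j + 1 + (i + 1) by ring] at h₁ ⊢
      linear_combination v (j + 1 + (i + 1)) * h₁ - h₀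

end JacobiDet

lemma abs_jacobiDet_one_le {v : ℕ → ℝ} {B : ℝ} (hB : 1 ≤ B) (hv : ∀ j, |v j| + 1 ≤ B) :
    ∀ n : ℕ, |jacobiDet 1 v n| ≤ B ^ n
  | 0 => by rw [jacobiDet, abs_one, pow_zero]
  | 1 => by
      rw [jacobiDet, pow_one]
      linarith [hv 0]
  | n + 2 => by
      have h₁ := abs_jacobiDet_one_le hB hv (n + 1)
      have h₀ := (abs_jacobiDet_one_le hB hv n).trans (pow_le_pow_right₀ hB n.le_succ)
      calc |jacobiDet 1 v (n + 2)|
          ≤ |v (n + 1)| * |jacobiDet 1 v (n + 1)| + |jacobiDet 1 v n| := by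
            rw [jacobiDet, one_mul, ← abs_mul]
            exact abs_sub _ _
        _ ≤ (B - 1) * B ^ (n + 1) + B ^ (n + 1) := by
            gcongr
            linarith [hv (n + 1)]
        _ = B ^ (n + 2) := by ring

section EvenTrigPolynomial

lemma re_mul_fourierChar_add_re_mul_fourierChar_neg (q : ℂ) (n : ℤ) (x : ℝ) :
    (q * 𝐞 (n * x)).re + (q * 𝐞 (n * -x)).re
      = 2 * (q.re * (Chebyshev.T ℝ n).eval (cos (2 * π * x))) := by
  have h₁ : 2 * π * (n * x) = n * (2 * π * x) := by ring
  have h₂ : 2 * π * (n * -x) = -(n * (2 * π * x)) := by ring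
  rw [Chebyshev.T_real_cos, Real.fourierChar_apply, Real.fourierChar_apply, h₁, h₂]
  simp only [Complex.mul_re, Complex.exp_ofReal_mul_I_re, Complex.exp_ofReal_mul_I_im, cos_neg,
    sin_neg]
  ring

/- Averaging over `±x` keeps only the real parts of the coefficients, and cosines of multiples
are Chebyshev polynomials. -/
lemma exists_eval_cos_of_even {f : ℝ → ℝ} (hf : ∀ x, f (-x) = f x) {p : ℂ[X]} {k : ℕ}
    (hp : p.natDegree ≤ 2 * k) (hfp : ∀ x, p.eval (𝐞 x : ℂ) = (𝐞 x : ℂ) ^ k * f x) :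
    ∃ Q : ℝ[X], Q.natDegree ≤ k ∧ ∀ x, f x = Q.eval (cos (2 * π * x)) := by
  have hlaurent : ∀ x, f x
      = ∑ j ∈ Finset.range (2 * k + 1), (p.coeff j * 𝐞 (((j - k : ℤ) : ℝ) * x)).re := fun x => by
    have hpow : ∀ n : ℕ, (𝐞 (n * x) : ℂ) = (𝐞 x : ℂ) ^ n := fun n => by
      rw [← Circle.coe_pow, ← AddChar.map_nsmul_eq_pow, nsmul_eq_mul]
    have hmul : (𝐞 x : ℂ) ^ k * f x = (𝐞 x : ℂ) ^ k *
        ∑ j ∈ Finset.range (2 * k + 1), p.coeff j * 𝐞 (((j - k : ℤ) : ℝ) * x) := by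
      rw [← hfp, eval_eq_sum_range' (by omega : p.natDegree < 2 * k + 1), Finset.mul_sum]
      refine Finset.sum_congr rfl fun j _ => ?_
      rw [mul_left_comm, ← hpow, ← hpow, ← Circle.coe_mul, ← AddChar.map_add_eq_mul]
      congr 4
      push_cast
      ring
    have := mul_left_cancel₀ (pow_ne_zero k (Circle.coe_ne_zero _)) hmul
    rw [← Complex.re_sum, ← this, Complex.ofReal_re]
  refine ⟨∑ j ∈ Finset.range (2 * k + 1), C (p.coeff j).re * Chebyshev.T ℝ (j - k),
    natDegree_sum_le_of_forall_le _ _ fun j hj => (natDegree_C_mul_le _ _).trans ?_, fun x => ?_⟩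
  · rw [Finset.mem_range] at hj
    rw [Chebyshev.natDegree_T]
    omega
  · have havg : 2 * f x = f x + f (-x) := by rw [hf]; ring
    rw [← mul_right_inj' two_ne_zero, havg, hlaurent, hlaurent, ← Finset.sum_add_distrib,
      eval_finsetSum, Finset.mul_sum]
    refine Finset.sum_congr rfl fun j _ => ?_
    rw [re_mul_fourierChar_add_re_mul_fourierChar_neg, eval_mul, eval_C]

end EvenTrigPolynomial

/-- The determinant of `E - H` restricted to the box `[a, a + k)`, for the discrete Schrödinger
operator `H` with potential `g`. -/
def boxDet (g : ℤ → ℝ) (E : ℝ) (k : ℕ) (a : ℤ) : ℝ := jacobiDet 1 (fun j => E - g (a + j)) k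

lemma boxDet_mul_eigenfunction {g : ℤ → ℝ} {E : ℝ} {φ : ℤ → ℝ}
    (h : IsEigenfunction g E φ) (a : ℤ) (i j : ℕ) :
    boxDet g E (i + 1 + j) a * φ (a + i)
      = boxDet g E j (a + i + 1) * φ (a - 1) + boxDet g E i a * φ (a + i + 1 + j) := by
  have hsol := jacobiDet_mul_solution (v := fun n => E - g (a + n)) (u := fun n => φ (a - 1 + n))
    (fun n => by
      have := h (a + n)
      rw [show a - 1 + ((n + 2 : ℕ) : ℤ) = a + n + 1 by push_cast; ring,
        show a - 1 + ((n + 1 : ℕ) : ℤ) = a + n by push_cast; ring,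
        show a - 1 + (n : ℤ) = a + n - 1 by ring]
      linarith) i j
  rw [show a - 1 + ((i + 1 : ℕ) : ℤ) = a + i by push_cast; ring,
    show a - 1 + ((i + 2 + j : ℕ) : ℤ) = a + i + 1 + j by push_cast; ring,
    show a - 1 + ((0 : ℕ) : ℤ) = a - 1 by simp] at hsol
  rw [boxDet, hsol, boxDet, boxDet]
  congr 4
  funext l
  push_cast
  ring_nf

/-- The sequence `M` decays backwards from `k` at the exponential rate `μ`; at such scales the
Green's function of a box of size `k` with a large determinant decays. -/
def IsGoodScale (M : ℕ → ℝ) (μ : ℝ) (k : ℕ) : Prop := ∀ j ≤ k, M j ≤ M k * exp (-μ * (k - j))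

lemma exists_isGoodScale {b B ε : ℝ} (hb : 1 < b) (hB : 1 ≤ B) (hε : 0 < ε) :
    ∃ G : ℕ, 0 < G ∧ ∀ M : ℕ → ℝ, (∀ j, b ^ j ≤ M j) → (∀ j, M j ≤ B ^ j) → ∀ K : ℕ,
      ∃ k, K ≤ k ∧ k ≤ G * K ∧ IsGoodScale M (log b - ε) k := by
  have hlogB : 0 ≤ log B := log_nonneg hB
  have hlogb : 0 < log b := log_pos hb
  obtain ⟨G, hG⟩ := exists_nat_gt (log B / ε + 1)
  have hG0 : 0 < G := by exact_mod_cast (show (0 : ℝ) < G by linarith [div_nonneg hlogB hε.le])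
  refine ⟨G, hG0, fun M hlow hupp K => ?_⟩
  have hb0 : 0 < b := by linarith
  have hpos : ∀ j, 0 < M j := fun j => (pow_pos hb0 j).trans_le (hlow j)
  have hloglow : ∀ j : ℕ, j * log b ≤ log (M j) := fun j => by
    rw [← log_pow]
    exact log_le_log (pow_pos hb0 j) (hlow j)
  have hlogupp : ∀ j : ℕ, log (M j) ≤ j * log B := fun j => by
    rw [← log_pow]
    exact log_le_log (hpos j) (hupp j)
  obtain ⟨k, hk, hmax⟩ := (Finset.range (G * K + 1)).exists_max_image
    (fun j => log (M j) - j * log b + ε * j) ⟨0, by simp⟩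
  rw [Finset.mem_range] at hk
  refine ⟨k, ?_, by omega, fun j hj => ?_⟩
  · by_contra! hlt
    have hend := hmax (G * K) (by simp)
    have hGK := hloglow (G * K)
    have hkB := hlogupp k
    have hkK : (k : ℝ) + 1 ≤ K := by exact_mod_cast hlt
    have hGε : log B + ε < G * ε := by
      rw [← div_lt_iff₀ hε, add_div, div_self hε.ne']
      exact hG
    push_cast at hend hGK
    nlinarith
  · have hjk := hmax j (by rw [Finset.mem_range]; omega)
    rw [← log_le_log_iff (hpos j) (mul_pos (hpos k) (exp_pos _)),
      log_mul (hpos k).ne' (exp_pos _).ne', log_exp]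
    linarith

lemma abs_eigenfunction_le_of_isGoodScale {g : ℤ → ℝ} {E μ Λ : ℝ} {φ : ℤ → ℝ}
    (h : IsEigenfunction g E φ) {M : ℕ → ℝ} (hM : ∀ j a, |boxDet g E j a| ≤ M j) {k : ℕ}
    (hMk : 0 < M k) (hk : IsGoodScale M μ k) {a p : ℤ}
    (hdet : M k ≤ |boxDet g E k a| * exp Λ) (hap : a ≤ p) (hpk : p < a + k) :
    |φ p| ≤ exp Λ * (exp (-μ * (p - a + 1)) * |φ (a - 1)|
      + exp (-μ * (a + k - p)) * |φ (a + k)|) := by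
  obtain ⟨i, rfl⟩ : ∃ i : ℕ, p = a + i := ⟨(p - a).toNat, by omega⟩
  obtain ⟨j, rfl⟩ : ∃ j : ℕ, k = i + 1 + j := ⟨k - (i + 1), by omega⟩
  have hpoisson := boxDet_mul_eigenfunction h a i j
  have hleft := (hM j (a + i + 1)).trans (hk j (by omega))
  have hright := (hM i a).trans (hk i (by omega))
  push_cast at hleft hright ⊢
  rw [show (i : ℝ) + 1 + j - j = i + 1 by ring] at hleft
  rw [show (i : ℝ) + 1 + j - i = 1 + j by ring] at hright
  rw [show (a : ℝ) + i - a + 1 = i + 1 by ring,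
    show (a : ℝ) + (i + 1 + j) - (a + i) = 1 + j by ring,
    show a + ((i : ℤ) + 1 + j) = a + i + 1 + j by ring]
  refine le_of_mul_le_mul_left ?_ hMk
  calc M (i + 1 + j) * |φ (a + i)|
      ≤ |boxDet g E (i + 1 + j) a| * exp Λ * |φ (a + i)| := by gcongr
    _ = exp Λ * |boxDet g E j (a + i + 1) * φ (a - 1) + boxDet g E i a * φ (a + i + 1 + j)| := by
        rw [← hpoisson, abs_mul]
        ring
    _ ≤ exp Λ * (|boxDet g E j (a + i + 1)| * |φ (a - 1)|
          + |boxDet g E i a| * |φ (a + i + 1 + j)|) := by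
        rw [← abs_mul, ← abs_mul]
        gcongr
        exact abs_add_le _ _
    _ ≤ exp Λ * (M (i + 1 + j) * exp (-μ * (i + 1)) * |φ (a - 1)|
          + M (i + 1 + j) * exp (-μ * (1 + j)) * |φ (a + i + 1 + j)|) := by gcongr
    _ = M (i + 1 + j) * (exp Λ * (exp (-μ * (i + 1)) * |φ (a - 1)|
          + exp (-μ * (1 + j)) * |φ (a + i + 1 + j)|)) := by ring

/-- The determinant of `E - H` on a box of size `k` for the almost Mathieu operator, as a function
of the phase at the left end of the box. -/
def amoDet (lam α E : ℝ) (k : ℕ) (t : ℝ) : ℝ := boxDet (amoPot lam α t) E k 0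

lemma boxDet_amoPot (lam α θ E : ℝ) (k : ℕ) (a : ℤ) :
    boxDet (amoPot lam α θ) E k a = amoDet lam α E k (θ + a * α) := by
  unfold amoDet boxDet amoPot
  congr 1
  funext j
  push_cast
  ring_nf

lemma abs_amoPot_le {lam : ℝ} (hlam : 0 ≤ lam) (α θ : ℝ) (n : ℤ) :
    |amoPot lam α θ n| ≤ 2 * lam := by
  rw [amoPot, abs_mul, abs_of_nonneg (by positivity)]
  exact mul_le_of_le_one_right (by positivity) (abs_cos_le_one _)

/-- The polynomial `P` with `P(e^{2πit}) = e^{2πikt} amoDet lam α E k t`. -/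
def amoDetPoly (lam α E : ℝ) (k : ℕ) : ℂ[X] :=
  jacobiDet (X ^ 2) (fun j => C (E : ℂ) * X
    - (C (lam * 𝐞 (j * α) : ℂ) * X ^ 2 + C (lam * 𝐞 (-(j * α)) : ℂ))) k

lemma fourierChar_mul_amoPot (lam α t : ℝ) (n : ℤ) :
    (𝐞 t : ℂ) * amoPot lam α t n = lam * 𝐞 (n * α) * (𝐞 t : ℂ) ^ 2 + lam * 𝐞 (-(n * α)) := by
  have hcos : (amoPot lam α t n : ℂ) = lam * (𝐞 (t + n * α) + 𝐞 (-(t + n * α))) := by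
    simp only [amoPot, Real.fourierChar_apply]
    push_cast
    rw [Complex.cos]
    ring_nf
  have hinv : (𝐞 t : ℂ) * 𝐞 (-t) = 1 := by
    rw [← Circle.coe_mul, ← AddChar.map_add_eq_mul, add_neg_cancel, AddChar.map_zero_eq_one,
      Circle.coe_one]
  rw [hcos, neg_add, AddChar.map_add_eq_mul, AddChar.map_add_eq_mul, Circle.coe_mul,
    Circle.coe_mul]
  linear_combination (lam * (𝐞 (-(n * α)) : ℂ)) * hinv

lemma eval_amoDetPoly (lam α E t : ℝ) (k : ℕ) :
    (amoDetPoly lam α E k).eval (𝐞 t : ℂ) = (𝐞 t : ℂ) ^ k * amoDet lam α E k t := by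
  rw [amoDet, boxDet, ← Complex.ofRealHom_eq_coe, map_jacobiDet, ← jacobiDet_scale, amoDetPoly,
    ← coe_evalRingHom, map_jacobiDet]
  congr 1
  · simp
  · funext j
    have := fourierChar_mul_amoPot lam α t j
    push_cast at this
    simp only [coe_evalRingHom, eval_sub, eval_add, eval_mul, eval_C, eval_X, eval_pow,
      Complex.ofRealHom_eq_coe, Complex.ofReal_sub, zero_add]
    linear_combination this

lemma natDegree_amoDetPoly_le (lam α E : ℝ) (k : ℕ) : (amoDetPoly lam α E k).natDegree ≤ 2 * k := by
  rw [mul_comm]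
  exact natDegree_jacobiDet_le (by compute_degree!) (fun j => by compute_degree!) k

lemma norm_eval_zero_amoDetPoly {lam : ℝ} (hlam : 0 ≤ lam) (α E : ℝ) (k : ℕ) :
    ‖(amoDetPoly lam α E k).eval 0‖ = lam ^ k := by
  rw [amoDetPoly, ← coe_evalRingHom, map_jacobiDet]
  simp only [coe_evalRingHom, eval_sub, eval_add, eval_mul, eval_C, eval_X, eval_pow, mul_zero,
    ne_eq, OfNat.ofNat_ne_zero, not_false_eq_true, zero_pow, zero_sub, zero_add,
    jacobiDet_zero_left, norm_prod, norm_neg, norm_ofReal_mul_fourierChar hlam,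
    Finset.prod_const, Finset.card_range]

lemma amoDet_neg_add_center (lam α E : ℝ) (k : ℕ) (t : ℝ) :
    amoDet lam α E k (-t - (k - 1) / 2 * α) = amoDet lam α E k (t - (k - 1) / 2 * α) := by
  refine jacobiDet_reverse 1 k _ _ fun i j hij => ?_
  have hk : (k : ℝ) = i + j + 1 := by exact_mod_cast hij.symm
  simp only [amoPot, hk, zero_add, Int.cast_natCast]
  rw [← cos_neg]
  ring_nf

lemma exists_amoDet_eq_eval_cos (lam α E : ℝ) (k : ℕ) :
    ∃ Q : ℝ[X], Q.natDegree ≤ k ∧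
      ∀ t, amoDet lam α E k (t - (k - 1) / 2 * α) = Q.eval (cos (2 * π * t)) := by
  set s : ℝ := -((k - 1) / 2 * α)
  refine exists_eval_cos_of_even (amoDet_neg_add_center lam α E k)
    (p := C ((𝐞 s : ℂ) ^ k)⁻¹ * (amoDetPoly lam α E k).comp (C (𝐞 s : ℂ) * X)) ?_ fun t => ?_
  · refine (natDegree_C_mul_le _ _).trans (natDegree_comp_le.trans ?_)
    calc (amoDetPoly lam α E k).natDegree * (C (𝐞 s : ℂ) * X).natDegree ≤ 2 * k * 1 := by
          gcongr
          · exact natDegree_amoDetPoly_le lam α E k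
          · exact natDegree_C_mul_le _ _ |>.trans natDegree_X_le
      _ = 2 * k := mul_one _
  · have hs : (𝐞 s : ℂ) ^ k ≠ 0 := pow_ne_zero k (Circle.coe_ne_zero _)
    rw [eval_mul, eval_comp, eval_mul, eval_C, eval_C, eval_X, ← Circle.coe_mul,
      ← AddChar.map_add_eq_mul, eval_amoDetPoly, AddChar.map_add_eq_mul, Circle.coe_mul, mul_pow,
      show s + t = t - (k - 1) / 2 * α by ring]
    field_simp

/-- The supremum of `|amoDet lam α E k|` over all phases. -/
def supDet (lam α E : ℝ) (k : ℕ) : ℝ := ⨆ t : ℝ, |amoDet lam α E k t|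

section SupDet

variable {lam : ℝ} (hlam : 0 ≤ lam) (α : ℝ)
include hlam

lemma abs_amoDet_le_pow {E B : ℝ} (hB : |E| + 2 * lam + 1 ≤ B) (k : ℕ) (t : ℝ) :
    |amoDet lam α E k t| ≤ B ^ k :=
  abs_jacobiDet_one_le (by linarith [abs_nonneg E])
    (fun j => by linarith [abs_sub E (amoPot lam α t (0 + j)), abs_amoPot_le hlam α t (0 + j)]) k

lemma abs_amoDet_le_supDet (E : ℝ) (k : ℕ) (t : ℝ) :
    |amoDet lam α E k t| ≤ supDet lam α E k :=
  le_ciSup (f := fun t => |amoDet lam α E k t|)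
    ⟨_, Set.forall_mem_range.mpr fun t => abs_amoDet_le_pow hlam α le_rfl k t⟩ t

lemma supDet_le_pow {E B : ℝ} (hB : |E| + 2 * lam + 1 ≤ B) (k : ℕ) : supDet lam α E k ≤ B ^ k :=
  ciSup_le fun t => abs_amoDet_le_pow hlam α hB k t

/- The maximum principle for `amoDetPoly` on the unit disc, as in Herman's argument for the
positivity of the Lyapunov exponent. -/
lemma pow_le_supDet (E : ℝ) (k : ℕ) : lam ^ k ≤ supDet lam α E k := by
  rw [← norm_eval_zero_amoDetPoly hlam α E k]
  refine Complex.norm_le_of_forall_mem_frontier_norm_le (U := Metric.ball (0 : ℂ) 1)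
    Metric.isBounded_ball (amoDetPoly lam α E k).differentiable.diffContOnCl (fun z hz => ?_)
    (subset_closure (Metric.mem_ball_self one_pos))
  rw [frontier_ball (0 : ℂ) one_ne_zero, mem_sphere_zero_iff_norm] at hz
  have hz_arg : z = 𝐞 (Complex.arg z / (2 * π)) := by
    rw [Real.fourierChar_apply, mul_div_cancel₀ _ (by positivity)]
    simpa only [hz, Complex.ofReal_one, one_mul] using (Complex.norm_mul_exp_arg_mul_I z).symm
  rw [hz_arg, eval_amoDetPoly, norm_mul, norm_pow, Circle.norm_coe, one_pow, one_mul,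
    Complex.norm_real]
  exact abs_amoDet_le_supDet hlam α E k _

end SupDet

end BoxDeterminants

/-! ### Interpolation on two blocks of nodes -/

section Lagrange

open Polynomial

lemma abs_eval_lagrange_basis {ι : Type*} [DecidableEq ι] (A : Finset ι) (x : ι → ℝ) (a : ι)
    (y : ℝ) :
    |(Lagrange.basis A x a).eval y|
      = (∏ b ∈ A.erase a, |y - x b|) / ∏ b ∈ A.erase a, |x a - x b| := by
  rw [Lagrange.basis, eval_prod, Finset.abs_prod, ← Finset.prod_div_distrib]
  simp only [Lagrange.basisDivisor, eval_mul, eval_C, eval_sub, eval_X, inv_mul_eq_div,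
    abs_div]

lemma abs_eval_le_of_lagrange {ι : Type*} [DecidableEq ι] {A : Finset ι} {x : ι → ℝ}
    (hx : Set.InjOn x A) {Q : ℝ[X]} (hQ : Q.natDegree < A.card) {u w y : ℝ}
    (hratio : ∀ a ∈ A, ∏ b ∈ A.erase a, |y - x b| ≤ u * ∏ b ∈ A.erase a, |x a - x b|)
    (hw : ∀ a ∈ A, |Q.eval (x a)| ≤ w) :
    |Q.eval y| ≤ A.card * (w * u) := by
  have hbasis : ∀ a ∈ A, |(Lagrange.basis A x a).eval y| ≤ u := fun a ha => by
    rw [abs_eval_lagrange_basis, div_le_iff₀]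
    · exact hratio a ha
    · refine Finset.prod_pos fun b hb => abs_pos.mpr (sub_ne_zero.mpr fun hab => ?_)
      obtain ⟨hba, hb⟩ := Finset.mem_erase.mp hb
      exact hba (hx hb ha hab.symm)
  rw [Lagrange.eq_interpolate (f := Q) hx (degree_le_natDegree.trans_lt (by exact_mod_cast hQ)),
    Lagrange.interpolate_apply, eval_finsetSum, ← nsmul_eq_mul]
  refine (Finset.abs_sum_le_sum_abs _ _).trans (Finset.sum_le_card_nsmul A _ _ fun a ha => ?_)
  rw [eval_mul, eval_C, abs_mul]
  exact mul_le_mul (hw a ha) (hbasis a ha) (abs_nonneg _) ((abs_nonneg _).trans (hw a ha))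

end Lagrange

lemma abs_cos_sub_cos (x y : ℝ) :
    |cos (2 * π * x) - cos (2 * π * y)| = chord (x - y) * chord (x + y) / 2 := by
  rw [cos_sub_cos, chord_eq_two_mul_abs_sin, chord_eq_two_mul_abs_sin,
    show (2 * π * x + 2 * π * y) / 2 = π * (x + y) by ring,
    show (2 * π * x - 2 * π * y) / 2 = π * (x - y) by ring]
  simp only [abs_mul, abs_neg, abs_two]
  ring

lemma prod_union_erase {ι : Type*} [DecidableEq ι] {s t : Finset ι} (hst : Disjoint s t) (c : ι)
    (f : ι → ℝ) :
    ∏ b ∈ (s ∪ t).erase c, f b = (∏ b ∈ s.erase c, f b) * ∏ b ∈ t.erase c, f b := by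
  rw [Finset.erase_union_distrib, Finset.prod_union]
  exact hst.mono (Finset.erase_subset _ _) (Finset.erase_subset _ _)

namespace IsDiophantineWith

variable {α σ : ℝ} {κ : ℕ}

lemma exists_prod_chord_union_le (h : IsDiophantineWith α σ κ) {ε : ℝ} (hε : 0 < ε) :
    ∃ C : ℝ, 0 ≤ C ∧ ∀ (t : ℝ) (a₁ a₂ : ℤ) (N₁ N₂ : ℕ) (c : ℤ),
      Disjoint (Finset.Ico a₁ (a₁ + N₁)) (Finset.Ico a₂ (a₂ + N₂)) →
      ∏ b ∈ (Finset.Ico a₁ (a₁ + N₁) ∪ Finset.Ico a₂ (a₂ + N₂)).erase c, chord (t + b * α)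
        ≤ exp (ε * (N₁ + N₂) + C) := by
  obtain ⟨C, hC, hprod⟩ := h.exists_prod_chord_le hε
  refine ⟨2 * C, by positivity, fun t a₁ a₂ N₁ N₂ c hdisj => ?_⟩
  rw [prod_union_erase hdisj, show ε * (N₁ + N₂) + 2 * C = (ε * N₁ + C) + (ε * N₂ + C) by ring,
    exp_add]
  exact mul_le_mul (hprod t a₁ N₁ c) (hprod t a₂ N₂ c)
    (Finset.prod_nonneg fun b _ => chord_nonneg _) (exp_pos _).le

lemma exists_le_prod_chord_union (h : IsDiophantineWith α σ κ) {ε : ℝ} (hε : 0 < ε) :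
    ∃ C : ℝ, 0 ≤ C ∧ ∀ (t : ℝ) (a₁ a₂ : ℤ) (N₁ N₂ : ℕ) (c : ℤ) (β₁ β₂ : ℝ),
      Disjoint (Finset.Ico a₁ (a₁ + N₁)) (Finset.Ico a₂ (a₂ + N₂)) → 0 ≤ β₁ → 0 ≤ β₂ →
      (∀ b ∈ Finset.Ico a₁ (a₁ + N₁), b ≠ c → exp (-β₁) ≤ chord (t + b * α)) →
      (∀ b ∈ Finset.Ico a₂ (a₂ + N₂), b ≠ c → exp (-β₂) ≤ chord (t + b * α)) →
      exp (-(ε * (N₁ + N₂) + C + β₁ + β₂))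
        ≤ ∏ b ∈ (Finset.Ico a₁ (a₁ + N₁) ∪ Finset.Ico a₂ (a₂ + N₂)).erase c,
            chord (t + b * α) := by
  obtain ⟨C, hC, hprod⟩ := h.exists_le_prod_chord hε
  refine ⟨2 * C, by positivity, fun t a₁ a₂ N₁ N₂ c β₁ β₂ hdisj hβ₁ hβ₂ h₁ h₂ => ?_⟩
  rw [prod_union_erase hdisj, show -(ε * (N₁ + N₂) + 2 * C + β₁ + β₂)
    = -(ε * N₁ + C + β₁) + -(ε * N₂ + C + β₂) by ring, exp_add]
  exact mul_le_mul
    (hprod t a₁ N₁ c β₁ hβ₁ fun b hb =>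
      h₁ b (Finset.mem_of_mem_erase hb) (Finset.ne_of_mem_erase hb))
    (hprod t a₂ N₂ c β₂ hβ₂ fun b hb =>
      h₂ b (Finset.mem_of_mem_erase hb) (Finset.ne_of_mem_erase hb))
    (exp_pos _).le (Finset.prod_nonneg fun b _ => chord_nonneg _)

lemma exp_neg_le_chord_mul_sub (h : IsDiophantineWith α σ κ) {a b : ℤ} (hab : b ≠ a) {R : ℝ}
    (hR : |(a : ℝ) - b| ≤ R) :
    exp (-(κ * log R - log σ)) ≤ chord (-(a * α) + b * α) := by
  have hpos : 0 < |(a : ℝ) - b| := abs_pos.mpr (sub_ne_zero.mpr (by exact_mod_cast hab.symm))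
  have hσ := h.pos
  have hdioph := h.le_chord (a - b) (sub_ne_zero.mpr hab.symm)
  push_cast at hdioph
  rw [show -(a * α) + b * α = -((a - b) * α) by ring, chord_neg, neg_sub, exp_sub, exp_log hσ,
    ← log_pow, exp_log (pow_pos (hpos.trans_le hR) _)]
  exact le_trans (by gcongr) hdioph

end IsDiophantineWith

/-- The points `cos(2π(θ + (b + (k - 1)/2)α))` at which `exists_amoDet_eq_eval_cos` interpolates:
the node `b` carries the determinant of the box `[b, b + k)`. -/
def node (α θ : ℝ) (k : ℕ) (b : ℤ) : ℝ := cos (2 * π * (θ + (b + (k - 1) / 2) * α))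

lemma abs_cos_sub_node (α θ s : ℝ) (k : ℕ) (b : ℤ) :
    |cos (2 * π * s) - node α θ k b| = chord ((θ + (k - 1) / 2 * α - s) + b * α)
      * chord ((θ + (k - 1) / 2 * α + s) + b * α) / 2 := by
  rw [node, abs_cos_sub_cos, ← chord_neg]
  ring_nf

lemma abs_node_sub_node (α θ : ℝ) (k : ℕ) (a b : ℤ) :
    |node α θ k a - node α θ k b|
      = chord (-(a * α) + b * α) * chord (2 * θ + (a + k - 1) * α + b * α) / 2 := by
  rw [node, abs_cos_sub_node]
  ring_nf

/-- Two disjoint intervals `[a₁, a₁ + N₁)` and `[a₂, a₂ + N₂)` containing the left end points of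
`k + 1` boxes of size `k`, such that the phases `2θ + (a + b + k - 1)α` are at distance at least
about `e^{-β₁}`, respectively `e^{-β₂}`, from `ℤ`. -/
structure IsNodePair (α θ : ℝ) (k : ℕ) (a₁ a₂ : ℤ) (N₁ N₂ : ℕ) (R β₁ β₂ : ℝ) : Prop where
  card : N₁ + N₂ = k + 1
  disjoint : Disjoint (Finset.Ico a₁ (a₁ + N₁)) (Finset.Ico a₂ (a₂ + N₂))
  one_le : 1 ≤ R
  nonneg₁ : 0 ≤ β₁
  nonneg₂ : 0 ≤ β₂
  abs_sub_le : ∀ a ∈ Finset.Ico a₁ (a₁ + N₁) ∪ Finset.Ico a₂ (a₂ + N₂),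
    ∀ b ∈ Finset.Ico a₁ (a₁ + N₁) ∪ Finset.Ico a₂ (a₂ + N₂), |(a : ℝ) - b| ≤ R
  le_chord₁ : ∀ a ∈ Finset.Ico a₁ (a₁ + N₁) ∪ Finset.Ico a₂ (a₂ + N₂),
    ∀ b ∈ Finset.Ico a₁ (a₁ + N₁), b ≠ a → exp (-β₁) ≤ chord (2 * θ + (a + b + k - 1 : ℤ) * α)
  le_chord₂ : ∀ a ∈ Finset.Ico a₁ (a₁ + N₁) ∪ Finset.Ico a₂ (a₂ + N₂),
    ∀ b ∈ Finset.Ico a₂ (a₂ + N₂), b ≠ a → exp (-β₂) ≤ chord (2 * θ + (a + b + k - 1 : ℤ) * α)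

/-- Interpolation: among the boxes of a node pair there is one whose determinant is close to the
supremum over all phases. -/
def HasTwoBlockInterpolation (α : ℝ) (κ : ℕ) (ε C : ℝ) : Prop :=
  ∀ (lam E : ℝ) {θ : ℝ} {k : ℕ} {a₁ a₂ : ℤ} {N₁ N₂ : ℕ} {R β₁ β₂ : ℝ},
    IsNodePair α θ k a₁ a₂ N₁ N₂ R β₁ β₂ →
    ∃ a ∈ Finset.Ico a₁ (a₁ + N₁) ∪ Finset.Ico a₂ (a₂ + N₂),
      supDet lam α E k
        ≤ |amoDet lam α E k (θ + a * α)| * exp (ε * k + C + 2 * κ * log R + β₁ + β₂)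

lemma exists_supDet_le_of_nodes {lam α E θ d u : ℝ} {k : ℕ} {A : Finset ℤ} (hA : A.card = k + 1)
    (hd : 0 < d)
    (hlower : ∀ a ∈ A, d ≤ ∏ b ∈ A.erase a,
      chord (-(a * α) + b * α) * chord (2 * θ + (a + k - 1) * α + b * α))
    (hupper : ∀ a ∈ A, ∀ s, ∏ b ∈ A.erase a, chord ((θ + (k - 1) / 2 * α - s) + b * α)
      * chord ((θ + (k - 1) / 2 * α + s) + b * α) ≤ u) :
    ∃ a ∈ A, supDet lam α E k ≤ |amoDet lam α E k (θ + a * α)| * ((k + 1) * (u / d)) := by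
  obtain ⟨a, ha, hmax⟩ := A.exists_max_image (fun a : ℤ => |amoDet lam α E k (θ + a * α)|)
    (Finset.card_pos.mp (by omega))
  obtain ⟨Q, hQdeg, hQ⟩ := exists_amoDet_eq_eval_cos lam α E k
  have hQnode : ∀ b : ℤ, Q.eval (node α θ k b) = amoDet lam α E k (θ + b * α) := fun b => by
    rw [node, ← hQ]
    ring_nf
  have hinj : Set.InjOn (node α θ k) A := fun b hb c hc hbc => by
    by_contra hne
    refine (hd.trans_le (hlower b hb)).ne'
      (Finset.prod_eq_zero (Finset.mem_erase.mpr ⟨Ne.symm hne, hc⟩) ?_)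
    have := abs_node_sub_node α θ k b c
    rw [hbc, sub_self, abs_zero] at this
    linarith
  refine ⟨a, ha, ciSup_le fun t => ?_⟩
  have hle := abs_eval_le_of_lagrange (Q := Q) (u := u / d)
    (y := cos (2 * π * (t + (k - 1) / 2 * α))) hinj (by omega) (fun b hb => ?_) fun b hb => by
      rw [hQnode]
      exact hmax b hb
  · rw [← hQ, add_sub_cancel_right, hA] at hle
    push_cast at hle
    linarith
  · simp only [abs_cos_sub_node, abs_node_sub_node, Finset.prod_div_distrib]
    rw [← mul_div_assoc]
    have hu : 0 ≤ u := (Finset.prod_nonneg fun c _ =>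
      mul_nonneg (chord_nonneg _) (chord_nonneg _)).trans (hupper b hb 0)
    refine div_le_div_of_nonneg_right ?_ (Finset.prod_nonneg fun _ _ => zero_le_two)
    calc _ ≤ u := hupper b hb _
      _ = u / d * d := (div_mul_cancel₀ u hd.ne').symm
      _ ≤ _ := by
        gcongr
        exact hlower b hb

lemma le_exp_mul_sub_log {e : ℝ} (he : 0 < e) (x : ℝ) : x ≤ exp (e * x - log e) := by
  rw [exp_sub, exp_log he, le_div_iff₀ he]
  linarith [add_one_le_exp (e * x)]

namespace IsDiophantineWith

variable {α σ : ℝ} {κ : ℕ}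

lemma exists_le_prod_of_isNodePair (h : IsDiophantineWith α σ κ) {ε : ℝ} (hε : 0 < ε) :
    ∃ C : ℝ, 0 ≤ C ∧ ∀ {θ : ℝ} {k : ℕ} {a₁ a₂ : ℤ} {N₁ N₂ : ℕ} {R β₁ β₂ : ℝ},
      IsNodePair α θ k a₁ a₂ N₁ N₂ R β₁ β₂ →
      ∀ a ∈ Finset.Ico a₁ (a₁ + N₁) ∪ Finset.Ico a₂ (a₂ + N₂),
        exp (-(2 * ε * (k + 1) + C + 2 * (κ * log R - log σ) + β₁ + β₂))
          ≤ ∏ b ∈ (Finset.Ico a₁ (a₁ + N₁) ∪ Finset.Ico a₂ (a₂ + N₂)).erase a,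
            chord (-(a * α) + b * α) * chord (2 * θ + (a + k - 1) * α + b * α) := by
  obtain ⟨C, hC, hlower⟩ := h.exists_le_prod_chord_union hε
  refine ⟨2 * C, by positivity, fun {θ k a₁ a₂ N₁ N₂ R β₁ β₂} hA a ha => ?_⟩
  have hNk : (N₁ : ℝ) + N₂ = k + 1 := by exact_mod_cast hA.card
  set β := κ * log R - log σ
  have hβ : 0 ≤ β := by
    linarith [mul_nonneg κ.cast_nonneg (log_nonneg hA.one_le), log_nonpos h.pos.le h.le_one]
  have hsum : ∀ b : ℤ, 2 * θ + (a + k - 1) * α + b * α = 2 * θ + (a + b + k - 1 : ℤ) * α :=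
    fun b => by push_cast; ring
  have hdiff : ∀ b ∈ Finset.Ico a₁ (a₁ + N₁) ∪ Finset.Ico a₂ (a₂ + N₂), b ≠ a →
      exp (-β) ≤ chord (-(a * α) + b * α) :=
    fun b hb hba => h.exp_neg_le_chord_mul_sub hba (hA.abs_sub_le a ha b hb)
  rw [Finset.prod_mul_distrib, ← hNk, show -(2 * ε * (N₁ + N₂) + 2 * C + 2 * β + β₁ + β₂)
    = -(ε * (N₁ + N₂) + C + β + β) + -(ε * (N₁ + N₂) + C + β₁ + β₂) by ring, exp_add]
  refine mul_le_mul
    (hlower _ a₁ a₂ N₁ N₂ a β β hA.disjoint hβ hβ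
      (fun b hb => hdiff b (Finset.mem_union_left _ hb))
      (fun b hb => hdiff b (Finset.mem_union_right _ hb)))
    (hlower _ a₁ a₂ N₁ N₂ a β₁ β₂ hA.disjoint hA.nonneg₁ hA.nonneg₂ ?_ ?_) (exp_pos _).le
    (Finset.prod_nonneg fun b _ => chord_nonneg _)
  · simpa only [hsum] using hA.le_chord₁ a ha
  · simpa only [hsum] using hA.le_chord₂ a ha

lemma exists_hasTwoBlockInterpolation (h : IsDiophantineWith α σ κ) {ε : ℝ} (hε : 0 < ε) :
    ∃ C : ℝ, 0 ≤ C ∧ HasTwoBlockInterpolation α κ ε C := by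
  set e := ε / 5 with he_def
  have he : 0 < e := by positivity
  obtain ⟨C₁, hC₁, hupper⟩ := h.exists_prod_chord_union_le he
  obtain ⟨C₂, hC₂, hlower⟩ := h.exists_le_prod_of_isNodePair he
  have hσ := log_nonpos h.pos.le h.le_one
  refine ⟨ε + 2 * C₁ + C₂ - 2 * log σ + |log e|, by linarith [abs_nonneg (log e)], ?_⟩
  intro lam E θ k a₁ a₂ N₁ N₂ R β₁ β₂ hA
  have hNk : (N₁ : ℝ) + N₂ = k + 1 := by exact_mod_cast hA.card
  obtain ⟨a, ha, hle⟩ := exists_supDet_le_of_nodes (lam := lam) (E := E)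
    (u := exp (e * (k + 1) + C₁) * exp (e * (k + 1) + C₁))
    (by simp [Finset.card_union_of_disjoint hA.disjoint, hA.card]) (exp_pos _) (hlower hA)
    fun a _ s => by
      rw [Finset.prod_mul_distrib, ← hNk]
      exact mul_le_mul (hupper _ a₁ a₂ N₁ N₂ a hA.disjoint) (hupper _ a₁ a₂ N₁ N₂ a hA.disjoint)
        (Finset.prod_nonneg fun b _ => chord_nonneg _) (exp_pos _).le
  refine ⟨a, ha, hle.trans (mul_le_mul_of_nonneg_left ?_ (abs_nonneg _))⟩
  calc ((k : ℝ) + 1) * _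
      ≤ exp (e * (k + 1) - log e) * _ := by gcongr; exact le_exp_mul_sub_log he (k + 1)
    _ ≤ _ := by
      rw [← exp_add, ← exp_sub, ← exp_add, exp_le_exp, he_def]
      linarith [neg_abs_le (log (ε / 5))]

end IsDiophantineWith

/-! ### Decay of eigenfunctions away from resonances -/

/-- A point at which `φ` is controlled by its values at two points, with a gain that is exponential
in their distances. -/
def IsRegularAt {X : Type*} [PseudoMetricSpace X] (φ : X → ℝ) (ν : ℝ) (y : X) : Prop :=
  ∃ a b, |φ y| ≤ (exp (-ν * dist y a) * |φ a| + exp (-ν * dist y b) * |φ b|) / 3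

section MaximumPrinciple

variable {X : Type*} [PseudoMetricSpace X] {φ : X → ℝ} {ν : ℝ}

lemma not_isRegularAt_of_abs_eq_one (hν : 0 ≤ ν) (hφ : ∀ n, |φ n| ≤ 1) {m : X} (hm : |φ m| = 1) :
    ¬ IsRegularAt φ ν m := by
  rintro ⟨a, b, h⟩
  have hle : ∀ c, exp (-ν * dist m c) * |φ c| ≤ 1 := fun c =>
    mul_le_one₀ (exp_le_one_iff.mpr (by nlinarith [dist_nonneg (x := m) (y := c)])) (abs_nonneg _)
      (hφ c)
  linarith [hle a, hle b]

lemma abs_le_exp_of_isRegularAt (hν : 0 ≤ ν) (hφ : ∀ n, |φ n| ≤ 1) {w : X → ℝ}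
    (hw : LipschitzWith 1 w) (hfin : {y | 0 < w y}.Finite)
    (hreg : ∀ y, 0 < w y → IsRegularAt φ ν y) (y : X) :
    |φ y| ≤ exp (-ν * w y) := by
  set F : X → ℝ := fun n => |φ n| * exp (ν * w n)
  have hφF : ∀ n, |φ n| = F n * exp (-ν * w n) := fun n => by
    rw [mul_assoc, ← exp_add, neg_mul, add_neg_cancel, exp_zero, mul_one]
  suffices hF : ∀ y, F y ≤ 1 by
    rw [hφF y]
    exact mul_le_of_le_one_left (exp_pos _).le (hF y)
  have hout : ∀ n, ¬ 0 < w n → F n ≤ 1 := fun n hn =>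
    mul_le_one₀ (hφ n) (exp_pos _).le (exp_le_one_iff.mpr (by nlinarith))
  by_contra! hcon
  obtain ⟨x, hx⟩ := hcon
  obtain ⟨z, hz, hmax⟩ := Set.exists_max_image _ F hfin
    ⟨x, by_contra fun h => (hout x h).not_gt hx⟩
  have hFz : 1 < F z := hx.trans_le (hmax x (by_contra fun h => (hout x h).not_gt hx))
  have hle : ∀ n, F n ≤ F z := fun n => by
    by_cases hn : 0 < w n
    · exact hmax n hn
    · exact (hout n hn).trans hFz.le
  have hterm : ∀ c, exp (-ν * dist z c) * |φ c| ≤ |φ z| := fun c => by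
    have hzc : w z ≤ w c + dist z c := by
      simpa using hw.le_add_mul z c
    rw [hφF z, hφF c, mul_left_comm, ← exp_add]
    have := hle c
    gcongr
    nlinarith
  obtain ⟨a, b, h⟩ := hreg z hz
  have : 0 < |φ z| := by
    rw [hφF z]
    positivity
  linarith [hterm a, hterm b]

end MaximumPrinciple

/-- `n₀` is the only integer in `[-R, R]` at which the phase `2θ + nα` may be within about `e^{-β}`
of an integer. Nothing is said about the size of `n₀`. -/
def IsOnlyResonance (α θ : ℝ) (R : ℕ) (β : ℝ) (n₀ : ℤ) : Prop :=
  ∀ n : ℤ, |n| ≤ R → n ≠ n₀ → exp (-β) ≤ chord (2 * θ + n * α)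

/-- The exponent `β` for which a Diophantine frequency has at most one resonance in `[-R, R]`. -/
def resonanceExponent (σ : ℝ) (κ R : ℕ) : ℝ := κ * log (2 * R) + log (2 / σ)

namespace IsDiophantineWith

variable {α σ : ℝ} {κ R : ℕ}

lemma resonanceExponent_nonneg (h : IsDiophantineWith α σ κ) (hR : 0 < R) :
    0 ≤ resonanceExponent σ κ R := by
  have hR' : (1 : ℝ) ≤ R := by exact_mod_cast hR
  have hσ : 1 ≤ 2 / σ := by
    rw [le_div_iff₀ h.pos]
    linarith [h.le_one]
  have := log_nonneg (show (1 : ℝ) ≤ 2 * R by linarith)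
  have := log_nonneg hσ
  unfold resonanceExponent
  positivity

lemma exists_isOnlyResonance (h : IsDiophantineWith α σ κ) (θ : ℝ) (hR : 0 < R) :
    ∃ n₀ : ℤ, IsOnlyResonance α θ R (resonanceExponent σ κ R) n₀ := by
  obtain ⟨n₀, hn₀, hmin⟩ := (Finset.Icc (-(R : ℤ)) R).exists_min_image
    (fun n : ℤ => chord (2 * θ + n * α)) ⟨0, by simp⟩
  refine ⟨n₀, fun n hn hne => ?_⟩
  rw [Finset.mem_Icc] at hn₀
  have hdist : |(n : ℝ) - n₀| ≤ (2 * R : ℕ) := by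
    have : |n - n₀| ≤ (2 * R : ℕ) := by
      rw [abs_le] at hn ⊢
      omega
    exact_mod_cast this
  have hsep := h.div_two_mul_pow_le_max_chord (2 * θ) hne hdist
  rw [max_eq_left (hmin n (Finset.mem_Icc.mpr (abs_le.mp hn)))] at hsep
  have hσ := h.pos
  calc exp (-resonanceExponent σ κ R) = σ / (2 * (2 * R : ℕ) ^ κ) := by
        rw [resonanceExponent, exp_neg, exp_add, ← log_pow, exp_log (by positivity),
          exp_log (by positivity)]
        push_cast
        field_simp
    _ ≤ _ := hsep

end IsDiophantineWith

/-- An eigenfunction of the almost Mathieu operator normalized to have the maximum `1` at `m`. -/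
structure IsNormalizedEigenfunction (lam α θ E : ℝ) (φ : ℤ → ℝ) (m : ℤ) : Prop where
  isEigenfunction : IsEigenfunction (amoPot lam α θ) E φ
  abs_eq_one : |φ m| = 1
  abs_le_one : ∀ n, |φ n| ≤ 1

section OffResonance

variable {lam α θ E : ℝ} {φ : ℤ → ℝ} {μ : ℝ} {k : ℕ}

lemma IsNormalizedEigenfunction.abs_energy_le {m : ℤ} (hlam : 0 ≤ lam)
    (hφ : IsNormalizedEigenfunction lam α θ E φ m) : |E| ≤ 2 + 2 * lam := by
  have hpot := abs_amoPot_le hlam α θ m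
  calc |E| = |E * φ m| := by rw [abs_mul, hφ.abs_eq_one, mul_one]
    _ = |φ (m + 1) + φ (m - 1) + amoPot lam α θ m * φ m| := by rw [hφ.isEigenfunction m]
    _ ≤ |φ (m + 1)| + |φ (m - 1)| + |amoPot lam α θ m| * |φ m| := by
      rw [← abs_mul]
      exact abs_add_three _ _ _
    _ ≤ 2 + 2 * lam := by
      rw [hφ.abs_eq_one]
      linarith [hφ.abs_le_one (m + 1), hφ.abs_le_one (m - 1)]

lemma isRegularAt_of_supDet_le (hlam : 0 < lam) (hφ : IsEigenfunction (amoPot lam α θ) E φ)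
    (hk : IsGoodScale (supDet lam α E) μ k) {a p : ℤ} {q : ℕ} (hq : 0 < q) (hap : a + q ≤ p)
    (hpk : p + q ≤ a + k) {Λ ε : ℝ} (hε : 0 ≤ ε) (hΛ : Λ + log 3 ≤ ε * q)
    (hdet : supDet lam α E k ≤ |amoDet lam α E k (θ + a * α)| * exp Λ) :
    IsRegularAt φ (μ - ε) p := by
  have hbox := abs_eigenfunction_le_of_isGoodScale hφ
    (fun j b => by
      rw [boxDet_amoPot]
      exact abs_amoDet_le_supDet hlam.le α E j _)
    ((pow_pos hlam k).trans_le (pow_le_supDet hlam.le α E k)) hk (by rwa [boxDet_amoPot])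
    (show a ≤ p by omega) (by omega)
  have hgain : ∀ d : ℝ, q ≤ d → exp Λ * exp (-μ * d) ≤ exp (-(μ - ε) * d) / 3 := fun d hd => by
    rw [le_div_iff₀ (by norm_num), ← exp_log (show (0 : ℝ) < 3 by norm_num), ← exp_add, ← exp_add,
      exp_le_exp]
    nlinarith
  have hleft : dist p (a - 1) = p - a + 1 := by
    rw [Int.dist_eq', abs_of_nonneg (by omega)]
    push_cast
    ring
  have hright : dist p (a + k) = a + k - p := by
    rw [dist_comm, Int.dist_eq', abs_of_nonneg (by omega)]
    push_cast
    ring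
  have hap' : (q : ℝ) ≤ p - a + 1 := by exact_mod_cast (show (q : ℤ) ≤ p - a + 1 by omega)
  have hpk' : (q : ℝ) ≤ a + k - p := by exact_mod_cast (show (q : ℤ) ≤ a + k - p by omega)
  refine ⟨a - 1, a + k, hbox.trans ?_⟩
  rw [hleft, hright]
  have := mul_le_mul_of_nonneg_right (hgain _ hap') (abs_nonneg (φ (a - 1)))
  have := mul_le_mul_of_nonneg_right (hgain _ hpk') (abs_nonneg (φ (a + k)))
  linarith

variable {R q Y : ℕ} {β : ℝ} {n₀ : ℤ}

/- Most nodes surround `u`. The few nodes near `v` are placed on the side of `v` for which the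
doubled centres of the boxes avoid `n₀`. -/
lemma exists_isNodePair (hres : IsOnlyResonance α θ R β n₀) (hβ : 0 ≤ β) (hq : 0 < q)
    (hqk : 8 * q ≤ k) (hR : 4 * Y + 4 * k ≤ R) {u v : ℤ} (hu : |u| ≤ Y) (hv : |v| ≤ Y)
    (huv : k < |u - v|) (huv₀ : k < |u + v - n₀|) (hu₀ : k < |2 * u - n₀|) :
    ∃ b : ℤ, v - k + q ≤ b ∧ b + 2 * q ≤ v - q + 1 ∧
      IsNodePair α θ k (u - k + q) b (k - 2 * q + 1) (2 * q) R β β := by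
  rw [abs_le] at hu hv
  rw [lt_abs] at huv huv₀ hu₀
  obtain ⟨b, hvb, hbv, hb⟩ : ∃ b : ℤ, v - k + q ≤ b ∧ b + 2 * q ≤ v - q + 1 ∧
      (n₀ < 2 * b + k - 1 ∨ 2 * b + 4 * q - 2 + k - 1 < n₀) := by
    by_cases h : n₀ < 2 * (v - 3 * q + 1) + k - 1
    · exact ⟨v - 3 * q + 1, by omega, by omega, Or.inl h⟩
    · exact ⟨v - k + q, by omega, by omega, Or.inr (by omega)⟩
  have hmem : ∀ c, c ∈ Finset.Ico (u - k + q) (u - k + q + (k - 2 * q + 1 : ℕ))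
      ∪ Finset.Ico b (b + (2 * q : ℕ)) ↔ u - k + q ≤ c ∧ c ≤ u - q ∨ b ≤ c ∧ c < b + 2 * q :=
    fun c => by
      rw [Finset.mem_union, Finset.mem_Ico, Finset.mem_Ico]
      omega
  refine ⟨b, hvb, hbv, by omega, ?_, by exact_mod_cast (show 1 ≤ R by omega), hβ, hβ, ?_, ?_, ?_⟩
  · rw [Finset.disjoint_left]
    intro c
    rw [Finset.mem_Ico, Finset.mem_Ico]
    omega
  · intro a ha c hc
    rw [hmem] at ha hc
    exact_mod_cast (show |a - c| ≤ R by rw [abs_le]; omega)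
  all_goals
    intro a ha c hc hca
    rw [hmem] at ha
    rw [Finset.mem_Ico] at hc
    exact hres _ (by rw [abs_le]; omega) (by omega)

variable {κ : ℕ} {ε₀ C : ℝ}

lemma exists_supDet_le_of_isOnlyResonance (hI : HasTwoBlockInterpolation α κ ε₀ C)
    (hres : IsOnlyResonance α θ R β n₀) (hβ : 0 ≤ β) (hq : 0 < q) (hqk : 8 * q ≤ k)
    (hR : 4 * Y + 4 * k ≤ R) {u v : ℤ} (hu : |u| ≤ Y) (hv : |v| ≤ Y) (huv : k < |u - v|)
    (huv₀ : k < |u + v - n₀|) (hu₀ : k < |2 * u - n₀|) :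
    ∃ p a : ℤ, (p = u ∨ p = v) ∧ a + q ≤ p ∧ p + q ≤ a + k ∧ supDet lam α E k
      ≤ |amoDet lam α E k (θ + a * α)| * exp (ε₀ * k + C + 2 * κ * log R + β + β) := by
  obtain ⟨b, hvb, hbv, hpair⟩ := exists_isNodePair hres hβ hq hqk hR hu hv huv huv₀ hu₀
  obtain ⟨a, ha, hdet⟩ := hI lam E hpair
  rw [Finset.mem_union, Finset.mem_Ico, Finset.mem_Ico] at ha
  rcases ha with ha | ha
  · exact ⟨u, a, Or.inl rfl, by omega, by omega, hdet⟩
  · exact ⟨v, a, Or.inr rfl, by omega, by omega, hdet⟩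

variable {ε : ℝ} {m : ℤ}

lemma isRegularAt_of_isOnlyResonance (hlam : 0 < lam) (hI : HasTwoBlockInterpolation α κ ε₀ C)
    (hφ : IsNormalizedEigenfunction lam α θ E φ m) (hk : IsGoodScale (supDet lam α E) μ k)
    (hres : IsOnlyResonance α θ R β n₀) (hβ : 0 ≤ β) (hq : 0 < q) (hqk : 8 * q ≤ k)
    (hR : 4 * Y + 4 * k ≤ R) (hε : 0 ≤ ε) (hεμ : ε ≤ μ)
    (hΛ : ε₀ * k + C + 2 * κ * log R + β + β + log 3 ≤ ε * q) (hm : |m| ≤ Y) {y : ℤ}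
    (hy : |y| ≤ Y) (hym : k < |y - m|) (hym₀ : k < |y + m - n₀|) :
    IsRegularAt φ (μ - ε) y := by
  obtain ⟨p, a, hp, hap, hpk, hdet⟩ : ∃ p a : ℤ, (p = y ∨ p = m) ∧ a + q ≤ p ∧ p + q ≤ a + k ∧
      supDet lam α E k
        ≤ |amoDet lam α E k (θ + a * α)| * exp (ε₀ * k + C + 2 * κ * log R + β + β) := by
    by_cases hy₀ : k < |2 * y - n₀|
    · exact exists_supDet_le_of_isOnlyResonance hI hres hβ hq hqk hR hy hm hym hym₀ hy₀
    · have hm₀ : k < |2 * m - n₀| := by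
        rw [lt_abs] at hym hym₀ hy₀ ⊢
        omega
      simpa only [or_comm] using exists_supDet_le_of_isOnlyResonance hI hres hβ hq hqk hR hm hy
        (by rwa [abs_sub_comm]) (by rwa [add_comm m y]) hm₀
  have hreg := isRegularAt_of_supDet_le hlam hφ.isEigenfunction hk hq hap hpk hε hΛ hdet
  rcases hp with rfl | rfl
  · exact hreg
  · exact absurd hreg
      (not_isRegularAt_of_abs_eq_one (sub_nonneg.mpr hεμ) hφ.abs_le_one hφ.abs_eq_one)

lemma abs_le_exp_of_isOnlyResonance (hlam : 0 < lam) (hI : HasTwoBlockInterpolation α κ ε₀ C)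
    (hφ : IsNormalizedEigenfunction lam α θ E φ m) (hk : IsGoodScale (supDet lam α E) μ k)
    (hres : IsOnlyResonance α θ R β n₀) (hβ : 0 ≤ β) (hq : 0 < q) (hqk : 8 * q ≤ k)
    (hR : 4 * Y + 4 * k ≤ R) (hε : 0 ≤ ε) (hεμ : ε ≤ μ)
    (hΛ : ε₀ * k + C + 2 * κ * log R + β + β + log 3 ≤ ε * q) (hm : |m| ≤ Y) (y : ℤ) :
    |φ y| ≤ exp (-(μ - ε) * min (min (dist y m) (dist y (n₀ - m)) - k) (Y - |(y : ℝ)|)) := by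
  have hw : LipschitzWith 1
      fun y : ℤ => min (min (dist y m) (dist y (n₀ - m)) - k) ((Y : ℝ) - |(y : ℝ)|) := by
    refine LipschitzWith.of_le_add fun x y => ?_
    have hxy : |(y : ℝ)| ≤ |(x : ℝ)| + dist x y := by
      rw [dist_comm, Int.dist_eq]
      linarith [abs_sub_abs_le_abs_sub (y : ℝ) x]
    grind [dist_triangle x y m, dist_triangle x y (n₀ - m)]
  refine abs_le_exp_of_isRegularAt (sub_nonneg.mpr hεμ) hφ.abs_le_one hw
    ((Set.finite_Icc (-(Y : ℤ)) Y).subset fun z hz => ?_) (fun z hz => ?_) y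
  · have hzY : |(z : ℝ)| < Y := sub_pos.mp (lt_min_iff.mp (Set.mem_ofPred.mp hz)).2
    have : |z| < Y := by exact_mod_cast hzY
    exact abs_le.mp this.le
  · obtain ⟨hzk, hzY⟩ := lt_min_iff.mp hz
    rw [sub_pos, lt_min_iff, Int.dist_eq', Int.dist_eq'] at hzk
    refine isRegularAt_of_isOnlyResonance hlam hI hφ hk hres hβ hq hqk hR hε hεμ hΛ hm
      ?_ ?_ ?_
    · exact_mod_cast (sub_pos.mp hzY).le
    · exact_mod_cast hzk.1
    · rw [show z + m - n₀ = z - (n₀ - m) by ring]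
      exact_mod_cast hzk.2

end OffResonance

/-! ### Decay near the second peak -/

section Tunnelling

variable {lam α θ E : ℝ} {φ : ℤ → ℝ} {μ A : ℝ} {p p' : ℤ}

lemma exists_endpoint {a h : ℤ} {k : ℕ} (hpp' : p < p') (hk : 4 * (p' - p) ≤ k)
    (hh : h = (p + p') / 2) (ha : h - k + 1 ≤ a) (ha' : a ≤ h + 1) :
    ∃ t, (t = p ∨ t = p') ∧ a ≤ t ∧ t < a + k ∧ ∀ z, z = a - 1 ∨ z = a + k →
      p' - p ≤ |t - z| ∨ p ≤ z ∧ z ≤ p' ∧ p' - p ≤ |t - z| + min (z - p) (p' - z) := by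
  by_cases hcase : 2 * (a - 1) ≤ 2 * h - k
  · refine ⟨p, Or.inl rfl, by omega, by omega, fun z hz => ?_⟩
    simp only [abs_eq_max_neg]
    omega
  · refine ⟨p', Or.inr rfl, by omega, by omega, fun z hz => ?_⟩
    simp only [abs_eq_max_neg]
    omega

lemma exp_mul_abs_le_of_decay (hμ : 0 ≤ μ) (hA : 0 ≤ A) (hφ : ∀ n, |φ n| ≤ 1)
    (hdec : ∀ z, p ≤ z → z ≤ p' → |φ z| ≤ exp (-μ * min ((z : ℝ) - p) (p' - z) + A)) {t z : ℤ}
    (hz : p' - p ≤ |t - z| ∨ p ≤ z ∧ z ≤ p' ∧ p' - p ≤ |t - z| + min (z - p) (p' - z)) :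
    exp (-μ * |(t : ℝ) - z|) * |φ z| ≤ exp (-μ * (p' - p) + A) := by
  rcases hz with hfar | ⟨hpz, hzp', hsum⟩
  · have hfar' : (p' : ℝ) - p ≤ |(t : ℝ) - z| := by exact_mod_cast hfar
    calc _ ≤ exp (-μ * |(t : ℝ) - z|) := mul_le_of_le_one_right (exp_pos _).le (hφ z)
      _ ≤ _ := by
        rw [exp_le_exp]
        nlinarith
  · have hsum' : (p' : ℝ) - p ≤ |(t : ℝ) - z| + min ((z : ℝ) - p) (p' - z) := by
      exact_mod_cast hsum
    calc _ ≤ exp (-μ * |(t : ℝ) - z|) * exp (-μ * min ((z : ℝ) - p) (p' - z) + A) := by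
          gcongr
          exact hdec z hpz hzp'
      _ ≤ _ := by
        rw [← exp_add, exp_le_exp]
        nlinarith

variable {κ k L R : ℕ} {ε C β : ℝ}

lemma exists_supDet_le_of_nonresonant (hI : HasTwoBlockInterpolation α κ ε C) (hβ : 0 ≤ β)
    (hres : ∀ n : ℤ, |n| ≤ R → exp (-β) ≤ chord (2 * θ + n * α)) {h : ℤ}
    (hR : 2 * |h| + k + 1 ≤ R) :
    ∃ a : ℤ, h - k + 1 ≤ a ∧ a ≤ h + 1 ∧ supDet lam α E k
      ≤ |amoDet lam α E k (θ + a * α)| * exp (ε * k + C + 2 * κ * log R + β) := by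
  have hmem : ∀ c, c ∈ Finset.Ico (h - k + 1) (h - k + 1 + (k + 1 : ℕ))
      ∪ Finset.Ico 0 (0 + (0 : ℕ)) ↔ h - k + 1 ≤ c ∧ c ≤ h + 1 := fun c => by
    rw [Finset.mem_union, Finset.mem_Ico, Finset.mem_Ico]
    omega
  have hh := le_abs_self h
  have hh' := neg_abs_le h
  have hpair : IsNodePair α θ k (h - k + 1) 0 (k + 1) 0 R β 0 := by
    refine ⟨rfl, by simp, by exact_mod_cast (show 1 ≤ R by omega), hβ, le_rfl, ?_, ?_,
      by simp⟩
    · intro a ha c hc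
      rw [hmem] at ha hc
      exact_mod_cast (show |a - c| ≤ R by rw [abs_le]; omega)
    · intro a ha c hc _
      rw [hmem] at ha
      rw [Finset.mem_Ico] at hc
      exact hres _ (by rw [abs_le]; omega)
  obtain ⟨a, ha, hdet⟩ := hI lam E hpair
  rw [add_zero] at hdet
  exact ⟨a, ((hmem a).mp ha).1, ((hmem a).mp ha).2, hdet⟩

lemma min_abs_le_of_nonresonant_of_lt (hlam : 0 < lam) (hI : HasTwoBlockInterpolation α κ ε C)
    (hφ : IsEigenfunction (amoPot lam α θ) E φ) (hφ₁ : ∀ n, |φ n| ≤ 1)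
    (hk : IsGoodScale (supDet lam α E) μ k) (hμ : 0 ≤ μ) (hβ : 0 ≤ β)
    (hres : ∀ n : ℤ, |n| ≤ R → exp (-β) ≤ chord (2 * θ + n * α)) (hLk : 8 * L ≤ k)
    (hR : 4 * L + 4 * k ≤ R) (hp : |p| ≤ L) (hp' : |p'| ≤ L) (hpp' : p < p') (hA : 0 ≤ A)
    (hdec : ∀ z, p ≤ z → z ≤ p' → |φ z| ≤ exp (-μ * min ((z : ℝ) - p) (p' - z) + A)) :
    min |φ p| |φ p'| ≤ 2 * exp (-μ * (p' - p) + A + (ε * k + C + 2 * κ * log R + β)) := by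
  rw [abs_le] at hp hp'
  obtain ⟨a, ha, ha', hdet⟩ := exists_supDet_le_of_nonresonant (lam := lam) (E := E) (k := k) hI hβ
    hres (h := (p + p') / 2) (by rw [abs_eq_max_neg]; omega)
  obtain ⟨t, ht, hat, htk, hend⟩ := exists_endpoint hpp' (by omega) rfl ha ha'
  have hbox := abs_eigenfunction_le_of_isGoodScale hφ
    (fun j b => by
      rw [boxDet_amoPot]
      exact abs_amoDet_le_supDet hlam.le α E j _)
    ((pow_pos hlam k).trans_le (pow_le_supDet hlam.le α E k)) hk (by rwa [boxDet_amoPot]) hat htk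
  have hleft := exp_mul_abs_le_of_decay hμ hA hφ₁ hdec (hend (a - 1) (Or.inl rfl))
  have hright := exp_mul_abs_le_of_decay hμ hA hφ₁ hdec (hend (a + k) (Or.inr rfl))
  rw [← Int.cast_sub, ← Int.cast_abs, abs_of_nonneg (by omega), Int.cast_sub] at hleft
  rw [← Int.cast_sub, ← Int.cast_abs, abs_of_nonpos (by omega), Int.cast_neg,
    Int.cast_sub] at hright
  push_cast at hleft hright
  rw [show (t : ℝ) - (a - 1) = t - a + 1 by ring] at hleft
  rw [show -((t : ℝ) - (a + k)) = a + k - t by ring] at hright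
  rw [exp_add _ (ε * k + C + 2 * κ * log R + β)]
  calc min |φ p| |φ p'| ≤ |φ t| := by rcases ht with rfl | rfl <;> simp
    _ ≤ _ := hbox
    _ ≤ exp (ε * k + C + 2 * κ * log R + β)
        * (exp (-μ * (p' - p) + A) + exp (-μ * (p' - p) + A)) := by
      gcongr
    _ = _ := by ring

lemma min_abs_le_of_nonresonant (hlam : 0 < lam) (hI : HasTwoBlockInterpolation α κ ε C)
    (hφ : IsEigenfunction (amoPot lam α θ) E φ) (hφ₁ : ∀ n, |φ n| ≤ 1)
    (hk : IsGoodScale (supDet lam α E) μ k) (hμ : 0 ≤ μ) (hβ : 0 ≤ β)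
    (hres : ∀ n : ℤ, |n| ≤ R → exp (-β) ≤ chord (2 * θ + n * α)) (hLk : 8 * L ≤ k)
    (hR : 4 * L + 4 * k ≤ R) (hp : |p| ≤ L) (hp' : |p'| ≤ L) (hpp' : p ≠ p') (hA : 0 ≤ A)
    (hdec : ∀ z ∈ Set.uIcc p p', |φ z| ≤ exp (-μ * min (dist z p) (dist z p') + A)) :
    min |φ p| |φ p'| ≤ 2 * exp (-μ * dist p p' + A + (ε * k + C + 2 * κ * log R + β)) := by
  wlog h : p < p' generalizing p p'
  · rw [min_comm, dist_comm]
    exact this hp' hp hpp'.symm (fun z hz => by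
      rw [min_comm]
      exact hdec z (Set.uIcc_comm p p' ▸ hz)) (lt_of_le_of_ne (not_lt.mp h) hpp'.symm)
  have hdist : ∀ {a b : ℤ}, a ≤ b → dist a b = b - a := fun hab => by
    rw [dist_comm, Int.dist_eq', abs_of_nonneg (sub_nonneg.mpr hab), Int.cast_sub]
  rw [hdist h.le]
  refine min_abs_le_of_nonresonant_of_lt hlam hI hφ hφ₁ hk hμ hβ hres hLk hR hp hp' h hA
    fun z hpz hzp' => ?_
  rw [← hdist hpz, ← hdist hzp', dist_comm p z]
  exact hdec z (Set.mem_uIcc_of_le hpz hzp')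

lemma dist_le_two_mul {x y : ℤ} (hx : |x| ≤ L) (hy : |y| ≤ L) : dist x y ≤ 2 * L := by
  have hx' : |(x : ℝ)| ≤ L := by exact_mod_cast hx
  have hy' : |(y : ℝ)| ≤ L := by exact_mod_cast hy
  rw [Int.dist_eq]
  linarith [abs_sub (x : ℝ) y]

/- The decay away from both peaks `m` and `n₀ - m` is the input: between `y` and `m` it loses at
most the distance from `y` to the second peak. -/
lemma IsNormalizedEigenfunction.abs_le_two_mul_exp {m n₀ y : ℤ} {l δ β₀ : ℝ} (hlam : 0 < lam)
    (hI : HasTwoBlockInterpolation α κ ε C) (hφ : IsNormalizedEigenfunction lam α θ E φ m)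
    (hk : IsGoodScale (supDet lam α E) μ k) (hμ : 0 ≤ μ) (hμl : μ ≤ l) (hβ₀ : 0 ≤ β₀) (hβ : 0 ≤ β)
    (hres : IsOnlyResonance α θ R β₀ n₀) (hβn₀ : exp (-β) ≤ chord (2 * θ + n₀ * α))
    (hLk : 8 * L ≤ k) (hR : 4 * L + 4 * k ≤ R) (hm : |m| ≤ L) (hy : |y| ≤ L) (hym : y ≠ m)
    (hδ : 0 ≤ δ)
    (hdec : ∀ z : ℤ, |z| ≤ L → |φ z| ≤ exp (-l * min (dist z m) (dist z (n₀ - m)) + δ)) :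
    |φ y| ≤ 2 * exp (-μ * dist y m + (δ + l * dist y (n₀ - m))
      + (ε * k + C + 2 * κ * log R + (β₀ + β))) := by
  have hl : 0 ≤ l := hμ.trans hμl
  have hle := min_abs_le_of_nonresonant (A := δ + l * dist y (n₀ - m)) hlam hI
    hφ.isEigenfunction hφ.abs_le_one hk hμ (add_nonneg hβ₀ hβ)
    (fun n hn => ?_) hLk hR hy hm hym (by positivity)
    fun z hz => (hdec z ?_).trans (exp_le_exp.mpr ?_)
  · rwa [hφ.abs_eq_one, min_eq_left (hφ.abs_le_one y)] at hle
  · by_cases hn₀ : n = n₀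
    · rw [hn₀]
      exact (exp_le_exp.mpr (by linarith)).trans hβn₀
    · exact (exp_le_exp.mpr (by linarith)).trans (hres n hn hn₀)
  · rw [Set.mem_uIcc] at hz
    rw [abs_le] at hy hm ⊢
    omega
  · have htri := dist_triangle_right z y (n₀ - m)
    have hmin : min (dist z y) (dist z m)
        ≤ min (dist z m) (dist z (n₀ - m)) + dist y (n₀ - m) := by
      grind [dist_nonneg (x := y) (y := n₀ - m)]
    have hnonneg : 0 ≤ min (dist z m) (dist z (n₀ - m)) := le_min dist_nonneg dist_nonneg
    nlinarith [dist_nonneg (x := y) (y := n₀ - m)]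

end Tunnelling

section Decay

lemma eventually_add_mul_log_le (A B : ℝ) {c : ℝ} (hc : 0 < c) :
    ∀ᶠ L : ℕ in atTop, A + B * log L ≤ c * L := by
  have ho : (fun x : ℝ => A + B * log x) =o[atTop] fun x : ℝ => x :=
    (Asymptotics.isLittleO_const_id_atTop A).add (Real.isLittleO_log_id_atTop.const_mul_left B)
  filter_upwards [tendsto_natCast_atTop_atTop.eventually (ho.bound hc)] with L hL
  simpa using (le_abs_self _).trans hL

lemma eventually_interpolation_loss_le (C σ : ℝ) (κ : ℕ) {ρ : ℕ} (hρ : 0 < ρ) {c : ℝ} (hc : 0 < c) :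
    ∀ᶠ L : ℕ in atTop, C + 2 * κ * log (ρ * L : ℕ) + 2 * resonanceExponent σ κ (ρ * L) + log 3
      ≤ c * L := by
  filter_upwards [eventually_gt_atTop 0, eventually_add_mul_log_le
    (C + 2 * κ * log ρ + 2 * resonanceExponent σ κ ρ + log 3) (4 * κ) hc] with L hL hle
  refine le_of_eq_of_le ?_ hle
  have hL' : (L : ℝ) ≠ 0 := by positivity
  rw [resonanceExponent, resonanceExponent, Nat.cast_mul, ← mul_assoc 2 (ρ : ℝ),
    log_mul (by positivity) hL', log_mul (x := 2 * (ρ : ℝ)) (by positivity) hL']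
  ring

variable {lam α σ : ℝ} {κ : ℕ}

lemma exists_isGoodScale_supDet (hlam : 1 < lam) {ε : ℝ} (hε : 0 < ε) :
    ∃ G : ℕ, 0 < G ∧ ∀ α E, |E| ≤ 2 + 2 * lam → ∀ K : ℕ, ∃ k, K ≤ k ∧ k ≤ G * K ∧
      IsGoodScale (supDet lam α E) (log lam - ε) k := by
  obtain ⟨G, hG, hscale⟩ := exists_isGoodScale (B := 4 * lam + 3) hlam (by linarith) hε
  exact ⟨G, hG, fun α E hE K => hscale (supDet lam α E) (pow_le_supDet (by linarith) α E)
    (supDet_le_pow (by linarith) α (by linarith)) K⟩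

/- The scale is a small multiple of `L`, so that `k` steps lose only a factor `e ^ (ε L)`. -/
lemma exists_small_scale (hlam : 1 < lam) {ε : ℝ} (hε : 0 < ε) :
    ∃ c : ℝ, 0 < c ∧ ∀ᶠ L : ℕ in atTop, ∀ α E, |E| ≤ 2 + 2 * lam →
      ∃ k : ℕ, 8 ≤ k ∧ c * L ≤ k ∧ log lam * k ≤ ε * L ∧
        IsGoodScale (supDet lam α E) (log lam - ε) k := by
  have hl := log_pos hlam
  obtain ⟨G, hG, hscale⟩ := exists_isGoodScale_supDet hlam hε
  set c := ε / (G * log lam) with hc_def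
  have hc : 0 < c := by positivity
  refine ⟨c / 2, by positivity, ?_⟩
  filter_upwards [tendsto_natCast_atTop_atTop.eventually_ge_atTop (8 / c)] with L hL α E hE
  rw [div_le_iff₀' hc] at hL
  obtain ⟨k, hKk, hkG, hk⟩ := hscale α E hE ⌊c * L⌋₊
  have hKk' : (⌊c * L⌋₊ : ℝ) ≤ k := by exact_mod_cast hKk
  have hfloor : (⌊c * L⌋₊ : ℝ) ≤ c * L := Nat.floor_le (by positivity)
  refine ⟨k, (Nat.le_floor (by exact_mod_cast hL)).trans hKk, ?_, ?_, hk⟩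
  · linarith [Nat.lt_floor_add_one (c * L)]
  · calc log lam * k ≤ log lam * (G * (c * L)) := by
          have : (k : ℝ) ≤ G * ⌊c * L⌋₊ := by exact_mod_cast hkG
          gcongr
          exact this.trans (by gcongr)
      _ = ε * L := by
        rw [hc_def]
        field_simp

lemma eventually_abs_le_off_resonance (hlam : 1 < lam) (hα : IsDiophantineWith α σ κ) {ε : ℝ}
    (hε : 0 < ε) {ρ : ℕ} (hρ : 16 ≤ ρ) :
    ∀ᶠ L : ℕ in atTop, ∀ θ n₀, IsOnlyResonance α θ (ρ * L) (resonanceExponent σ κ (ρ * L)) n₀ →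
      ∀ E φ m, IsNormalizedEigenfunction lam α θ E φ m → |m| ≤ L → ∀ y : ℤ, |y| ≤ L →
        |φ y| ≤ exp (-log lam * min (dist y m) (dist y (n₀ - m)) + ε * L) := by
  have hl := log_pos hlam
  set e := min ε (log lam) / 5 with he_def
  have he : 0 < e := div_pos (lt_min hε hl) (by norm_num)
  have heε : 5 * e ≤ ε := by linarith [min_le_left ε (log lam)]
  have hel : 5 * e ≤ log lam := by linarith [min_le_right ε (log lam)]
  obtain ⟨c, hc, hscale⟩ := exists_small_scale hlam he
  obtain ⟨C, -, hI⟩ := hα.exists_hasTwoBlockInterpolation (show 0 < e / 32 by positivity)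
  filter_upwards [eventually_gt_atTop 0, hscale,
    eventually_interpolation_loss_le C σ κ (show 0 < ρ by omega)
      (show 0 < e * c / 32 by positivity)]
    with L hL hscale hloss θ n₀ hres E φ m hφ hm y hy
  obtain ⟨k, hk8, hck, hlk, hk⟩ := hscale α E (hφ.abs_energy_le (by linarith))
  have hkL : (k : ℝ) ≤ L := by nlinarith
  have hkL' : k ≤ L := by exact_mod_cast hkL
  have hkq : (k : ℝ) ≤ 16 * (k / 8 : ℕ) := by exact_mod_cast (show k ≤ 16 * (k / 8) by omega)
  have hdecay := abs_le_exp_of_isOnlyResonance (Y := 3 * L) (q := k / 8) (by linarith) hI hφ hk hres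
    (hα.resonanceExponent_nonneg (by positivity)) (by omega) (by omega) (by nlinarith) he.le
    (by linarith) (by nlinarith) (by omega) y
  refine hdecay.trans (exp_le_exp.mpr ?_)
  have hy' : |(y : ℝ)| ≤ L := by exact_mod_cast hy
  have hym := dist_le_two_mul hy hm
  set D := min (dist y m) (dist y (n₀ - m))
  have hD : D ≤ 2 * L := (min_le_left _ _).trans hym
  rw [min_eq_left (by push_cast; linarith)]
  nlinarith

lemma eventually_abs_le_tunnelling (hlam : 1 < lam) (hα : IsDiophantineWith α σ κ) {ε : ℝ}
    (hε : 0 < ε) :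
    ∃ ρ₀ : ℕ, ∀ ρ ≥ ρ₀, ∀ᶠ L : ℕ in atTop, ∀ θ n₀,
      IsOnlyResonance α θ (ρ * L) (resonanceExponent σ κ (ρ * L)) n₀ →
      ∀ β, 0 ≤ β → exp (-β) ≤ chord (2 * θ + n₀ * α) →
      ∀ E φ m, IsNormalizedEigenfunction lam α θ E φ m → |m| ≤ L → ∀ δ : ℝ, 0 ≤ δ →
        (∀ z : ℤ, |z| ≤ L →
          |φ z| ≤ exp (-log lam * min (dist z m) (dist z (n₀ - m)) + δ)) →
        ∀ y : ℤ, |y| ≤ L →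
          |φ y| ≤ exp (-log lam * dist y m + log lam * dist y (n₀ - m) + β + δ + ε * L) := by
  have hl := log_pos hlam
  set e := min ε (log lam) / 4 with he_def
  have he : 0 < e := div_pos (lt_min hε hl) (by norm_num)
  have heε : 4 * e ≤ ε := by linarith [min_le_left ε (log lam)]
  have hel : 4 * e ≤ log lam := by linarith [min_le_right ε (log lam)]
  obtain ⟨G, hG, hscale⟩ := exists_isGoodScale_supDet hlam he
  obtain ⟨C, -, hI⟩ := hα.exists_hasTwoBlockInterpolation (show 0 < e / (8 * G) by positivity)
  refine ⟨4 + 32 * G, fun ρ hρ => ?_⟩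
  filter_upwards [eventually_gt_atTop 0,
    eventually_interpolation_loss_le C σ κ (show 0 < ρ by omega) he]
    with L hL hloss θ n₀ hres β hβ hβn₀ E φ m hφ hm δ hδ hdec y hy
  have hym := dist_le_two_mul hy hm
  have hres₀ := hα.resonanceExponent_nonneg (R := ρ * L) (mul_pos (by omega) hL)
  rcases eq_or_ne y m with rfl | hne
  · refine (hφ.abs_le_one y).trans (one_le_exp ?_)
    rw [dist_self, mul_zero, zero_add]
    positivity
  obtain ⟨k, hLk, hkG, hk⟩ := hscale α E (hφ.abs_energy_le (by linarith)) (8 * L)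
  have hkG' : e / (8 * G) * k ≤ e * L := by
    have : (k : ℝ) ≤ G * (8 * L) := by exact_mod_cast hkG
    calc e / (8 * G) * k ≤ e / (8 * G) * (G * (8 * L)) := by gcongr
      _ = e * L := by field_simp
  have hle := hφ.abs_le_two_mul_exp (by linarith) hI hk (by linarith) (by linarith) hres₀ hβ hres
    hβn₀ hLk (show 4 * L + 4 * k ≤ ρ * L by nlinarith) hm hy hne hδ hdec
  calc |φ y| ≤ exp (log 3) * _ := by
        rw [exp_log (by norm_num)]
        exact hle.trans (by gcongr; norm_num)
    _ ≤ _ := by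
      rw [← exp_add, exp_le_exp]
      nlinarith

/-- The decay of the normalized eigenfunctions peaked in `[-L, L]`, up to an error `e^{εL}`: away
from the peak `m` and its reflection `n₀ - m`, and away from `m` alone when the phase `2θ + n₀α` is
not within about `e^{-β}` of an integer. -/
structure HasDecayUpTo (lam α θ ε : ℝ) (L : ℕ) (n₀ : ℤ) : Prop where
  abs_le : ∀ {E φ m}, IsNormalizedEigenfunction lam α θ E φ m → |m| ≤ L → ∀ {y : ℤ}, |y| ≤ L →
    |φ y| ≤ exp (-log lam * min (dist y m) (dist y (n₀ - m)) + ε * L)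
  abs_le_of_le_chord : ∀ {E φ m}, IsNormalizedEigenfunction lam α θ E φ m → |m| ≤ L →
    ∀ {y : ℤ}, |y| ≤ L → ∀ {β : ℝ}, 0 ≤ β → exp (-β) ≤ chord (2 * θ + n₀ * α) →
      |φ y| ≤ exp (-log lam * dist y m + log lam * dist y (n₀ - m) + β + ε * L)

lemma eventually_exists_hasDecayUpTo (hlam : 1 < lam) (hα : IsDiophantineWith α σ κ) (θ : ℝ)
    {ε : ℝ} (hε : 0 < ε) : ∀ᶠ L : ℕ in atTop, ∃ n₀, HasDecayUpTo lam α θ ε L n₀ := by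
  obtain ⟨ρ₀, htunnel⟩ := eventually_abs_le_tunnelling hlam hα (half_pos hε)
  filter_upwards [eventually_gt_atTop 0,
    eventually_abs_le_off_resonance hlam hα (half_pos hε) (le_max_left 16 ρ₀),
    htunnel (max 16 ρ₀) (le_max_right 16 ρ₀)] with L hL hdec htunnel
  obtain ⟨n₀, hres⟩ := hα.exists_isOnlyResonance θ (R := max 16 ρ₀ * L) (by positivity)
  have hεL : 0 ≤ ε / 2 * L := by positivity
  refine ⟨n₀, fun hφ hm y hy => (hdec θ n₀ hres _ _ _ hφ hm y hy).trans (exp_le_exp.mpr ?_),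
    fun hφ hm y hy β hβ hβn₀ => (htunnel θ n₀ hres β hβ hβn₀ _ _ _ hφ hm (ε / 2 * L) hεL
      (hdec θ n₀ hres _ _ _ hφ hm) y hy).trans_eq ?_⟩
  · linarith
  · ring_nf

end Decay

/-! ### The resonance rate `δ(α, θ)` -/

section PhaseRate

variable {α θ σ : ℝ} {κ : ℕ}

/-- The sequence whose limit superior is `deltaPhase α θ`. When it is not bounded above, the paper
has `δ(α, θ) = ∞`, while the real number `deltaPhase α θ` is the junk value `0`. -/
def phaseRate (α θ : ℝ) (n : ℤ) : ℝ := -log (distToInt (2 * θ + n * α)) / |(n : ℝ)|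

lemma deltaPhase_nonneg (hfin : IsBoundedUnder (· ≤ ·) cofinite (phaseRate α θ)) :
    0 ≤ deltaPhase α θ := by
  refine le_limsup_of_frequently_le (Frequently.of_forall fun n => ?_) hfin
  have hdist : distToInt (2 * θ + n * α) ≤ 1 := (abs_sub_round _).trans (by norm_num)
  exact div_nonneg (neg_nonneg.mpr (log_nonpos (distToInt_nonneg _) hdist)) (abs_nonneg _)

lemma IsDiophantineWith.eventually_distToInt_pos (hα : IsDiophantineWith α σ κ) (θ : ℝ) :
    ∀ᶠ n : ℤ in cofinite, 0 < distToInt (2 * θ + n * α) := by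
  suffices {n : ℤ | ¬ 0 < distToInt (2 * θ + n * α)}.Subsingleton from this.finite
  have hchord : ∀ {n : ℤ}, ¬ 0 < distToInt (2 * θ + n * α) → chord (2 * θ + n * α) ≤ 0 :=
    fun hn => (chord_le_two_pi_mul_distToInt _).trans
      (mul_nonpos_of_nonneg_of_nonpos (by positivity) (not_lt.mp hn))
  intro n hn k hk
  by_contra hnk
  have hpos := hα.chord_pos (sub_ne_zero.mpr hnk)
  have hle := chord_sub_le (2 * θ + n * α) (2 * θ + k * α)
  rw [show 2 * θ + n * α - (2 * θ + k * α) = ((n - k : ℤ) : ℝ) * α by push_cast; ring] at hle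
  linarith [hchord hn, hchord hk]

lemma eventually_exp_neg_le_chord (hα : IsDiophantineWith α σ κ)
    (hfin : IsBoundedUnder (· ≤ ·) cofinite (phaseRate α θ)) {d : ℝ} (hd : deltaPhase α θ < d) :
    ∀ᶠ n : ℤ in cofinite, exp (-(d * |(n : ℝ)|)) ≤ chord (2 * θ + n * α) := by
  have hrate : ∀ᶠ n : ℤ in cofinite, phaseRate α θ n < d := eventually_lt_of_limsup_lt hd hfin
  filter_upwards [hrate, hα.eventually_distToInt_pos θ, eventually_cofinite_ne 0]
    with n hrate hdist hn
  have hn' : 0 < |(n : ℝ)| := abs_pos.mpr (Int.cast_ne_zero.mpr hn)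
  have hlog : -log (distToInt (2 * θ + n * α)) < d * |(n : ℝ)| := (div_lt_iff₀ hn').mp hrate
  calc exp (-(d * |(n : ℝ)|)) ≤ distToInt (2 * θ + n * α) :=
        (le_log_iff_exp_le hdist).mp (by linarith)
    _ ≤ 4 * distToInt (2 * θ + n * α) := by linarith
    _ ≤ chord (2 * θ + n * α) := four_mul_distToInt_le_chord _

lemma frequently_chord_le (hinf : ¬ IsBoundedUnder (· ≤ ·) cofinite (phaseRate α θ)) {a : ℝ}
    (ha : 0 ≤ a) :
    ∃ᶠ n : ℤ in cofinite, chord (2 * θ + n * α) ≤ 2 * π * exp (-(a * |(n : ℝ)|)) := by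
  have hrate : ∃ᶠ n : ℤ in cofinite, a < phaseRate α θ n := fun h =>
    hinf ⟨a, eventually_map.mpr (h.mono fun _ => not_lt.mp)⟩
  refine hrate.mono fun n hn => (chord_le_two_pi_mul_distToInt _).trans ?_
  have hpos : 0 < phaseRate α θ n := ha.trans_lt hn
  have hn' : 0 < |(n : ℝ)| := by
    refine (abs_nonneg _).lt_of_ne' fun h => hpos.ne' ?_
    rw [phaseRate, h, div_zero]
  have hdist : 0 < distToInt (2 * θ + n * α) := by
    refine (distToInt_nonneg _).lt_of_ne' fun h => hpos.ne' ?_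
    rw [phaseRate, h, log_zero, neg_zero, zero_div]
  have hlog : a * |(n : ℝ)| < -log (distToInt (2 * θ + n * α)) := (lt_div_iff₀ hn').mp hn
  gcongr
  exact (log_le_iff_le_exp hdist).mp (by linarith)

end PhaseRate

lemma summable_exp_neg_mul_abs {c : ℝ} (hc : 0 < c) :
    Summable fun n : ℤ => exp (-c * |(n : ℝ)|) := by
  have h : Summable fun n : ℕ => exp (-c * n) := by
    simpa only [mul_comm] using Real.summable_exp_nat_mul_iff.mpr (neg_neg_of_pos hc)
  refine Summable.of_nat_of_neg ?_ ?_ <;> simpa using h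

/-! ### Square-summable eigenfunctions of almost reflection-symmetric potentials -/

section Reflection

variable {g φ : ℤ → ℝ} {E B e η : ℝ} {n : ℤ}

/-- The Wronskian of `φ` and its reflection `j ↦ φ (n - j)`. -/
def reflWronskian (φ : ℤ → ℝ) (n j : ℤ) : ℝ := φ (j + 1) * φ (n - j) - φ j * φ (n - (j + 1))

lemma reflWronskian_sub (hφ : IsEigenfunction g E φ) (n j : ℤ) :
    reflWronskian φ n j - reflWronskian φ n (j - 1) = (g (n - j) - g j) * (φ j * φ (n - j)) := by
  have hj := hφ j
  have hnj := hφ (n - j)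
  simp only [reflWronskian]
  rw [sub_add_cancel, show n - (j - 1) = n - j + 1 by ring, ← sub_sub n j 1]
  linear_combination φ (n - j) * hj - φ j * hnj

lemma tendsto_cofinite_zero_of_summable_sq (hsum : Summable fun j => φ j ^ 2) :
    Tendsto φ cofinite (nhds 0) := by
  have h := hsum.tendsto_cofinite_zero.sqrt
  simp only [Real.sqrt_zero, Real.sqrt_sq_eq_abs] at h
  exact (tendsto_zero_iff_abs_tendsto_zero _).mpr h

lemma tendsto_reflWronskian (hφ : Tendsto φ cofinite (nhds 0)) (n : ℤ) :
    Tendsto (reflWronskian φ n) cofinite (nhds 0) := by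
  have hinj : ∀ {f : ℤ → ℤ}, Function.Injective f → Tendsto (fun j => φ (f j)) cofinite (nhds 0) :=
    fun hf => hφ.comp hf.tendsto_cofinite
  have h := ((hinj (add_left_injective 1)).mul (hinj (sub_right_injective (b := n)))).sub
    (hφ.mul (hinj ((sub_right_injective (b := n)).comp (add_left_injective 1))))
  rwa [mul_zero, sub_zero] at h

lemma abs_reflWronskian_le (hφ : IsEigenfunction g E φ) (hsum : HasSum (fun j => φ j ^ 2) 1)
    (hg : ∀ j, |g (n - j) - g j| ≤ e) (j : ℤ) : |reflWronskian φ n j| ≤ e := by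
  have he : 0 ≤ e := (abs_nonneg _).trans (hg 0)
  have hinj : Function.Injective fun i : ℕ => j - (i : ℤ) :=
    (sub_right_injective (b := j)).comp Nat.cast_injective
  have hinj' : Function.Injective fun i : ℕ => n - (j - (i : ℤ)) :=
    (sub_right_injective (b := n)).comp hinj
  have hsum₁ := hsum.summable.comp_injective hinj
  have hsum₂ := hsum.summable.comp_injective hinj'
  have hle : ∀ {f : ℕ → ℤ}, Function.Injective f → ∑' i, φ (f i) ^ 2 ≤ 1 := fun hf =>
    (tsum_comp_le_tsum_of_inj hsum.summable (fun _ => sq_nonneg _) hf).trans_eq hsum.tsum_eq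
  have hstep : ∀ i : ℕ, dist (reflWronskian φ n (j - i)) (reflWronskian φ n (j - (i + 1 : ℕ))) ≤
      e / 2 * (φ (j - i) ^ 2 + φ (n - (j - i)) ^ 2) := fun i => by
    rw [Real.dist_eq, Nat.cast_succ, ← sub_sub, reflWronskian_sub hφ, abs_mul,
      abs_mul, ← sq_abs (φ (j - i)), ← sq_abs (φ (n - (j - i)))]
    nlinarith [mul_le_mul_of_nonneg_right (hg (j - i))
      (mul_nonneg (abs_nonneg (φ (j - i))) (abs_nonneg (φ (n - (j - i))))),
      two_mul_le_add_sq |φ (j - i)| |φ (n - (j - i))|]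
  have hlim : Tendsto (fun i : ℕ => reflWronskian φ n (j - i)) atTop (nhds 0) :=
    Nat.cofinite_eq_atTop ▸ (tendsto_reflWronskian
      (tendsto_cofinite_zero_of_summable_sq hsum.summable) n).comp hinj.tendsto_cofinite
  have h := dist_le_tsum_of_dist_le_of_tendsto₀ _ hstep ((hsum₁.add hsum₂).mul_left _) hlim
  rw [tsum_mul_left, Nat.cast_zero, sub_zero, dist_zero_right, Real.norm_eq_abs] at h
  have hadd := hsum₁.tsum_add hsum₂
  simp only [Function.comp_apply] at hadd
  nlinarith [hle hinj, hle hinj']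

lemma exists_abs_sub_reflection_le_at_center (hφ : IsEigenfunction g E φ) (hgB : ∀ j, |g j| ≤ B)
    (hη : 0 ≤ η) (hW : |reflWronskian φ n (n / 2)| ≤ η ^ 2) :
    ∃ ς : ℝ, |ς| = 1 ∧ |φ (n / 2) - ς * φ (n - n / 2)| ≤ (|E| + B + 2) * η ∧
      |φ (n / 2 + 1) - ς * φ (n - (n / 2 + 1))| ≤ (|E| + B + 2) * η := by
  have hB : 0 ≤ |E| + B := add_nonneg (abs_nonneg E) ((abs_nonneg _).trans (hgB 0))
  have hηC : η ≤ (|E| + B + 2) * η := by nlinarith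
  have factor : ∀ {a b : ℝ}, |a * b| ≤ η ^ 2 → |a| ≤ η ∨ |b| ≤ η := fun {a b} hab => by
    by_contra! h
    rw [abs_mul] at hab
    nlinarith [mul_lt_mul'' h.1 h.2 hη hη]
  unfold reflWronskian at hW
  set p := n / 2 with hp
  rcases Int.emod_two_eq_zero_or_one n with heven | hodd
  · rw [show n - p = p by omega, show n - (p + 1) = p - 1 by omega] at hW ⊢
    rw [mul_comm (φ p), ← sub_mul] at hW
    rcases factor hW with hdiff | hmid
    · exact ⟨1, abs_one, by simpa using hη.trans hηC, by rw [one_mul]; exact hdiff.trans hηC⟩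
    · refine ⟨-1, by norm_num, ?_, ?_⟩
      · rw [show φ p - -1 * φ p = 2 * φ p by ring, abs_mul, abs_two]
        nlinarith
      · rw [show φ (p + 1) - -1 * φ (p - 1) = (E - g p) * φ p by linear_combination hφ p, abs_mul]
        exact mul_le_mul (by linarith [abs_sub E (g p), hgB p]) hmid (abs_nonneg _) (by linarith)
  · rw [show n - p = p + 1 by omega, show n - (p + 1) = p by omega] at hW ⊢
    rw [mul_self_sub_mul_self, add_comm (φ (p + 1))] at hW
    rcases factor hW with hadd | hsub
    · refine ⟨-1, by norm_num, ?_, ?_⟩ <;> rw [neg_one_mul, sub_neg_eq_add]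
      · exact hadd.trans hηC
      · rw [add_comm]
        exact hadd.trans hηC
    · refine ⟨1, abs_one, ?_, ?_⟩ <;> rw [one_mul]
      · rw [abs_sub_comm]
        exact hsub.trans hηC
      · exact hsub.trans hηC

lemma abs_le_pow_mul_of_recursion {u : ℤ → ℝ} {C : ℝ} {p : ℤ} (hC : 2 ≤ C) (hη : 0 ≤ η)
    (hrec : ∀ q, |u (q + 1)| ≤ (C - 2) * |u q| + |u (q - 1)| + η) (hp : |u p| ≤ C * η)
    (hp' : |u (p + 1)| ≤ C * η) (k : ℕ) :
    |u (p + k)| ≤ C ^ (k + 1) * η ∧ |u (p + k + 1)| ≤ C ^ (k + 1) * η := by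
  induction k with
  | zero => simpa using ⟨hp, hp'⟩
  | succ k ih =>
    obtain ⟨hk, hk'⟩ := ih
    have hpow : η ≤ C ^ (k + 1) * η := le_mul_of_one_le_left hη (one_le_pow₀ (by linarith))
    have hstep := hrec (p + k + 1)
    rw [add_sub_cancel_right] at hstep
    rw [pow_succ' C (k + 1), mul_assoc, Nat.cast_succ, ← add_assoc]
    constructor <;> nlinarith

lemma abs_sub_reflection_le (hφ : IsEigenfunction g E φ) (hgB : ∀ j, |g j| ≤ B)
    (hφ1 : ∀ j, |φ j| ≤ 1) (hη : 0 ≤ η) (hg : ∀ j, |g (n - j) - g j| ≤ η) {ς : ℝ} (hς : |ς| = 1)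
    (hp : |φ (n / 2) - ς * φ (n - n / 2)| ≤ (|E| + B + 2) * η)
    (hp' : |φ (n / 2 + 1) - ς * φ (n - (n / 2 + 1))| ≤ (|E| + B + 2) * η) (j : ℤ) :
    |φ j - ς * φ (n - j)| ≤ (|E| + B + 2) ^ (n.natAbs + j.natAbs + 2) * η := by
  have hB : 0 ≤ |E| + B := add_nonneg (abs_nonneg E) ((abs_nonneg _).trans (hgB 0))
  have hrec : ∀ q, |φ (q + 1) - ς * φ (n - (q + 1))| ≤ (|E| + B + 2 - 2) * |φ q - ς * φ (n - q)| +
      |φ (q - 1) - ς * φ (n - (q - 1))| + η := fun q => by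
    have hdecomp : φ (q + 1) - ς * φ (n - (q + 1)) = (E - g q) * (φ q - ς * φ (n - q)) -
        (φ (q - 1) - ς * φ (n - (q - 1))) + ς * ((g (n - q) - g q) * φ (n - q)) := by
      rw [show n - (q - 1) = n - q + 1 by ring, ← sub_sub n q 1]
      linear_combination hφ q - ς * hφ (n - q)
    have herr : |ς * ((g (n - q) - g q) * φ (n - q))| ≤ η := by
      rw [abs_mul, hς, one_mul, abs_mul]
      exact (mul_le_of_le_one_right (abs_nonneg _) (hφ1 _)).trans (hg q)
    have hpot : |E - g q| ≤ |E| + B + 2 - 2 := by linarith [abs_sub E (g q), hgB q]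
    rw [hdecomp]
    refine (abs_add_le _ _).trans (add_le_add ((abs_sub _ _).trans ?_) herr)
    rw [abs_mul]
    gcongr
  have hright : ∀ i, n / 2 ≤ i → i ≤ n / 2 + n.natAbs + j.natAbs + 1 →
      |φ i - ς * φ (n - i)| ≤ (|E| + B + 2) ^ (n.natAbs + j.natAbs + 2) * η := fun i hi hi' => by
    obtain ⟨k, hk⟩ := Int.eq_ofNat_of_zero_le (sub_nonneg.mpr hi)
    have hgrowth := (abs_le_pow_mul_of_recursion (u := fun i => φ i - ς * φ (n - i)) (by linarith)
      hη hrec hp hp' k).1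
    rw [← hk, add_sub_cancel] at hgrowth
    exact hgrowth.trans (mul_le_mul_of_nonneg_right
      (pow_le_pow_right₀ (by linarith) (by omega)) hη)
  have hrefl : |φ j - ς * φ (n - j)| = |φ (n - j) - ς * φ (n - (n - j))| := by
    have hς2 : ς * ς = 1 := by rw [← abs_mul_abs_self, hς, one_mul]
    rw [sub_sub_cancel, ← abs_neg, ← one_mul |_|, ← hς, ← abs_mul]
    congr 1
    linear_combination φ (n - j) * hς2
  rcases le_total (n / 2) j with hj | hj
  · exact hright j hj (by omega)
  · rw [hrefl]
    exact hright (n - j) (by omega) (by omega)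

/- The Wronskian of `φ` and its reflection is nearly constant, and it vanishes at infinity. Being
small at the symmetry center, it forces `φ` to be nearly even or nearly odd there. -/
lemma abs_le_abs_reflection_add (hφ : IsEigenfunction g E φ) (hsum : HasSum (fun j => φ j ^ 2) 1)
    (hgB : ∀ j, |g j| ≤ B) (hη : 0 ≤ η) (hη1 : η ≤ 1) (hg : ∀ j, |g (n - j) - g j| ≤ η ^ 2)
    (j : ℤ) : |φ j| ≤ |φ (n - j)| + (|E| + B + 2) ^ (n.natAbs + j.natAbs + 2) * η := by
  have hφ1 : ∀ j, |φ j| ≤ 1 := fun j =>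
    (sq_le_one_iff_abs_le_one _).mp (le_hasSum hsum j fun _ _ => sq_nonneg _)
  obtain ⟨ς, hς, hp, hp'⟩ :=
    exists_abs_sub_reflection_le_at_center hφ hgB hη (abs_reflWronskian_le hφ hsum hg (n / 2))
  have hsub := abs_sub_reflection_le hφ hgB hφ1 hη
    (fun i => (hg i).trans (pow_le_of_le_one hη hη1 two_ne_zero)) hς hp hp' j
  have habs : |ς * φ (n - j)| = |φ (n - j)| := by rw [abs_mul, hς, one_mul]
  linarith [abs_sub_abs_le_abs_sub (φ j) (ς * φ (n - j))]

/-- The obstruction of Jitomirskaya and Simon. -/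
lemma not_frequently_almost_symmetric (hφ : IsEigenfunction g E φ)
    (hsum : HasSum (fun j => φ j ^ 2) 1) (hgB : ∀ j, |g j| ≤ B) {K : ℝ} (hK : 0 ≤ K) :
    ¬ ∃ᶠ n : ℤ in cofinite, ∀ j, |g (n - j) - g j| ≤
      K ^ 2 * exp (-(2 * (log (|E| + B + 2) + 1) * |(n : ℝ)|)) := by
  intro hsymm
  suffices ∀ j, φ j = 0 by
    refine zero_ne_one (HasSum.unique ?_ hsum)
    simp only [this, ne_eq, OfNat.ofNat_ne_zero, not_false_eq_true, zero_pow, hasSum_zero]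
  intro j
  have hC : 1 ≤ |E| + B + 2 := by linarith [abs_nonneg E, (abs_nonneg _).trans (hgB 0)]
  set C := |E| + B + 2 with hCdef
  set η : ℤ → ℝ := fun n => K * exp (-((log C + 1) * |(n : ℝ)|)) with hη
  have hη0 : ∀ n, 0 ≤ η n := fun n => by positivity
  have hη2 : ∀ n, η n ^ 2 = K ^ 2 * exp (-(2 * (log C + 1) * |(n : ℝ)|)) := fun n => by
    rw [hη, mul_pow, ← Real.exp_nat_mul]
    push_cast
    ring_nf
  have hpow : ∀ n : ℤ, C ^ n.natAbs * η n = K * exp (-1 * |(n : ℝ)|) := fun n => by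
    rw [hη, ← Real.rpow_natCast, Nat.cast_natAbs, Int.cast_abs,
      Real.rpow_def_of_pos (by linarith), mul_left_comm, ← Real.exp_add]
    ring_nf
  have hexp := (summable_exp_neg_mul_abs one_pos).tendsto_cofinite_zero
  have hη1 : ∀ᶠ n in cofinite, η n ≤ 1 := by
    filter_upwards [(hexp.const_mul K).eventually_le_const (by simp : K * 0 < 1)] with n hn
    rw [← hpow] at hn
    exact (le_mul_of_one_le_left (hη0 n) (one_le_pow₀ hC)).trans hn
  have hsmall : ∃ᶠ n in cofinite,
      |φ j| ≤ |φ (n - j)| + C ^ (j.natAbs + 2) * (K * exp (-1 * |(n : ℝ)|)) := by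
    refine (hsymm.and_eventually hη1).mono fun n ⟨hsymm, hη1⟩ => ?_
    have hrefl := abs_le_abs_reflection_add hφ hsum hgB (hη0 n) hη1 (by rwa [hη2]) j
    rwa [← hCdef, add_assoc, pow_add, mul_comm (C ^ _), mul_assoc, hpow] at hrefl
  have hlim : Tendsto (fun n : ℤ => |φ (n - j)| + C ^ (j.natAbs + 2) * (K * exp (-1 * |(n : ℝ)|)))
      cofinite (nhds (|0| + C ^ (j.natAbs + 2) * (K * 0))) :=
    (((tendsto_cofinite_zero_of_summable_sq hsum.summable).comp
      (sub_left_injective (b := j)).tendsto_cofinite).abs).add ((hexp.const_mul K).const_mul _)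
  have h := ge_of_tendsto_of_frequently hlim hsmall
  rwa [abs_zero, mul_zero, mul_zero, add_zero, abs_nonpos_iff] at h

end Reflection

lemma abs_amoPot_reflection_sub_le {lam : ℝ} (hlam : 0 ≤ lam) (α θ : ℝ) (n j : ℤ) :
    |amoPot lam α θ (n - j) - amoPot lam α θ j| ≤ 2 * lam * chord (2 * θ + n * α) := by
  have harg : θ + ((n - j : ℤ) : ℝ) * α + (θ + j * α) = 2 * θ + n * α := by push_cast; ring
  rw [amoPot, amoPot, ← mul_sub, abs_mul, abs_of_nonneg (by positivity), abs_cos_sub_cos, harg]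
  gcongr
  nlinarith [chord_le_two (θ + ((n - j : ℤ) : ℝ) * α - (θ + j * α)), chord_nonneg (2 * θ + n * α)]

lemma isBoundedUnder_phaseRate {lam α θ E : ℝ} {φ : ℤ → ℝ} (hlam : 0 ≤ lam)
    (hφ : IsEigenfunction (amoPot lam α θ) E φ) (hsum : HasSum (fun j => φ j ^ 2) 1) :
    IsBoundedUnder (· ≤ ·) cofinite (phaseRate α θ) := by
  by_contra hinf
  have hrate : 0 ≤ 2 * (log (|E| + 2 * lam + 2) + 1) := by
    have := log_nonneg (show 1 ≤ |E| + 2 * lam + 2 by linarith [abs_nonneg E])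
    positivity
  refine not_frequently_almost_symmetric hφ hsum (abs_amoPot_le hlam α θ)
    (Real.sqrt_nonneg (2 * lam * (2 * π))) ((frequently_chord_le hinf hrate).mono fun n hn j => ?_)
  calc |amoPot lam α θ (n - j) - amoPot lam α θ j|
      ≤ 2 * lam * chord (2 * θ + n * α) := abs_amoPot_reflection_sub_le hlam α θ n j
    _ ≤ 2 * lam * (2 * π * exp (-(2 * (log (|E| + 2 * lam + 2) + 1) * |(n : ℝ)|))) := by gcongr
    _ = _ := by rw [Real.sq_sqrt (by positivity), ← mul_assoc]

/-! ### Decay outside a window of length `(2 + d / log λ) L` -/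

section Window

variable {lam α θ d ε σ t : ℝ} {κ : ℕ} {E : ℝ} {φ : ℤ → ℝ} {m y n₀ : ℤ} {L : ℕ}

lemma HasDecayUpTo.abs_le_of_tunnelling_cost (hdec : HasDecayUpTo lam α θ ε L n₀)
    (hφ : IsNormalizedEigenfunction lam α θ E φ m) (hm : |m| ≤ L) (hy : |y| ≤ L)
    (hlam : 1 ≤ lam) (hd : 0 ≤ d) {K : ℝ} (hym : K ≤ dist y m)
    (hreflect : dist y (n₀ - m) ≤ K → exp (-(d * |(n₀ : ℝ)|)) ≤ chord (2 * θ + n₀ * α) ∧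
      d * |(n₀ : ℝ)| + 2 * log lam * K ≤ log lam * dist y m) :
    |φ y| ≤ exp (-log lam * K + ε * L) := by
  have hlog : 0 ≤ log lam := log_nonneg hlam
  rcases le_total (dist y (n₀ - m)) K with hnear | hfar
  · obtain ⟨hchord, hcost⟩ := hreflect hnear
    refine (hdec.abs_le_of_le_chord hφ hm hy (by positivity) hchord).trans (exp_le_exp.mpr ?_)
    linarith [mul_le_mul_of_nonneg_left hnear hlog]
  · refine (hdec.abs_le hφ hm hy).trans (exp_le_exp.mpr ?_)
    linarith [mul_le_mul_of_nonneg_left (le_min hym hfar) hlog]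

lemma HasDecayUpTo.abs_le_of_abs_center_le (hdec : HasDecayUpTo lam α θ ε L n₀)
    (hφ : IsNormalizedEigenfunction lam α θ E φ m) (hlam : 1 ≤ lam) (hd : 0 ≤ d) (ht : 0 ≤ t)
    (ht' : t ≤ 1 / 8) (htd : 8 * (log lam * t) ≤ log lam - d) (hm : |(m : ℝ)| ≤ t * L)
    (hy : |y| = L)
    (hrate : (L : ℝ) / 2 ≤ |(n₀ : ℝ)| → exp (-(d * |(n₀ : ℝ)|)) ≤ chord (2 * θ + n₀ * α)) :
    |φ y| ≤ exp (-log lam * (t * L) + ε * L) := by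
  have hlog : 0 ≤ log lam := log_nonneg hlam
  have hyL : |(y : ℝ)| = L := by rw [← Int.cast_abs, hy, Int.cast_natCast]
  have hmL : |m| ≤ L := by
    rw [← Int.cast_le (R := ℝ), Int.cast_abs, Int.cast_natCast]
    nlinarith
  have hym : (1 - t) * L ≤ dist y m := by
    rw [Int.dist_eq]
    linarith [abs_sub_abs_le_abs_sub (y : ℝ) m]
  refine hdec.abs_le_of_tunnelling_cost hφ hmL hy.le hlam hd (by nlinarith) fun hnear => ?_
  rw [Int.dist_eq, Int.cast_sub] at hnear
  have hlow : (1 - 2 * t) * L ≤ |(n₀ : ℝ)| := by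
    have htri := abs_sub_abs_le_abs_sub (y : ℝ) (y - (n₀ - m))
    rw [sub_sub_cancel] at htri
    linarith [abs_sub (n₀ : ℝ) m]
  have hupp : |(n₀ : ℝ)| ≤ (1 + 2 * t) * L := by
    have htri := abs_sub (y + m : ℝ) (y - (n₀ - m))
    rw [show (y + m : ℝ) - (y - (n₀ - m)) = n₀ by ring] at htri
    linarith [abs_add_le (y : ℝ) m]
  refine ⟨hrate (by nlinarith), ?_⟩
  have hdlog : d * t ≤ log lam * t := mul_le_mul_of_nonneg_right (by nlinarith) ht
  calc d * |(n₀ : ℝ)| + 2 * log lam * (t * L)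
      ≤ d * ((1 + 2 * t) * L) + 2 * log lam * (t * L) := by gcongr
    _ = (d + 2 * (d * t) + 2 * (log lam * t)) * L := by ring
    _ ≤ (log lam - log lam * t) * L := by gcongr; linarith [mul_nonneg hlog ht]
    _ = log lam * ((1 - t) * L) := by ring
    _ ≤ log lam * dist y m := by gcongr

lemma exists_forall_lt_abs_of_eventually_cofinite {p : ℤ → Prop} (h : ∀ᶠ n in cofinite, p n) :
    ∃ N : ℕ, ∀ n : ℤ, (N : ℤ) < |n| → p n := by
  obtain ⟨N, hN⟩ := ((eventually_cofinite.mp h).image Int.natAbs).bddAbove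
  refine ⟨N, fun n hn => ?_⟩
  by_contra hp
  have hle : n.natAbs ≤ N := hN ⟨n, hp, rfl⟩
  grind

lemma exists_eventually_abs_le_far (hlam : 1 < lam) (hα : IsDiophantineWith α σ κ) (hd : 0 ≤ d)
    (hdlog : d < log lam)
    (hrate : ∀ᶠ n : ℤ in cofinite, exp (-(d * |(n : ℝ)|)) ≤ chord (2 * θ + n * α)) :
    ∃ c > 0, ∃ C : ℕ, 1 ≤ C ∧ ∀ᶠ L : ℕ in atTop, ∀ {E φ m},
      IsNormalizedEigenfunction lam α θ E φ m → |m| ≤ L →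
        ∀ y : ℤ, C * (L : ℤ) < |y| → |φ y| ≤ exp (-c * |(y : ℝ)|) := by
  have hlog : 0 < log lam := log_pos hlam
  obtain ⟨N, hN⟩ := exists_forall_lt_abs_of_eventually_cofinite hrate
  set t := (log lam - d) / (8 * log lam) with htdef
  have ht : 0 < t := div_pos (sub_pos.mpr hdlog) (by positivity)
  have htd : 8 * (log lam * t) = log lam - d := by
    rw [htdef]
    field_simp
  obtain ⟨C, hC⟩ := exists_nat_gt (1 / t)
  have hCt : 1 < C * t := (div_lt_iff₀ ht).mp hC
  have hCpos : 1 ≤ C := by exact_mod_cast (one_div_pos.mpr ht).trans hC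
  obtain ⟨M, hM⟩ := eventually_atTop.mp
    (eventually_exists_hasDecayUpTo hlam hα θ (ε := log lam * t / 2) (by positivity))
  refine ⟨log lam * t / 2, by positivity, C, hCpos, ?_⟩
  filter_upwards [eventually_ge_atTop M, eventually_ge_atTop (2 * N)]
    with L hLM hLN E φ m hφ hm y hy
  have hLY : C * L < y.natAbs := by
    rw [Int.abs_eq_natAbs] at hy
    exact_mod_cast hy
  have hLY' : L ≤ C * L := Nat.le_mul_of_pos_left L hCpos
  obtain ⟨n₀, hdec⟩ := hM y.natAbs (by omega)
  have hmY : |(m : ℝ)| ≤ t * y.natAbs := by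
    have h1 : |(m : ℝ)| ≤ L := by exact_mod_cast hm
    have h2 : (C * L : ℝ) ≤ y.natAbs := by exact_mod_cast hLY.le
    nlinarith [(Nat.cast_nonneg L : (0 : ℝ) ≤ L)]
  have h := hdec.abs_le_of_abs_center_le hφ hlam.le hd ht.le (by nlinarith) htd.le hmY
    (Int.abs_eq_natAbs y) fun hn => hN n₀ (by
      have h1 : (2 * N : ℝ) < y.natAbs := by exact_mod_cast (by omega : 2 * N < y.natAbs)
      have h2 : (N : ℝ) < |(n₀ : ℝ)| := by linarith
      exact_mod_cast h2)
  rw [Nat.cast_natAbs, Int.cast_abs] at h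
  exact h.trans_eq (by ring_nf)

lemma card_Icc_le {a b : ℤ} {c : ℝ} (hc : 0 ≤ c) (h : (b : ℝ) - a + 1 ≤ c) :
    ((Finset.Icc a b).card : ℝ) ≤ c := by
  have hcard : ((Finset.Icc a b).card : ℤ) = max (b + 1 - a) 0 := by
    rw [Int.card_Icc, Int.toNat_eq_max]
  rw [← Int.cast_natCast, hcard, Int.cast_max, Int.cast_zero]
  push_cast
  exact max_le (by linarith) hc

/-- Outside the window `W`, a site `y` near the reflection `n₀ - m` of a center `m ∈ [-L, L]` is so
far from `m` that the decay from `m` to `y` beats the resonance at `n₀`; take `r = d / log lam`. -/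
lemma exists_window_of_nonneg {r : ℝ} (hr : 0 ≤ r) (hr' : r ≤ 1) (L K N : ℕ) (hn₀ : 0 ≤ n₀) :
    ∃ W : Finset ℤ, (W.card : ℝ) ≤ (2 + r) * L + (5 * K + 2 * N + 2) ∧
      ∀ y m : ℤ, |m| ≤ L → y ∉ W → K ≤ dist y m ∧ (dist y (n₀ - m) ≤ K →
        (N : ℤ) < |n₀| ∧ r * |(n₀ : ℝ)| + 2 * K ≤ dist y m) := by
  set A : ℤ := L + K + N with hA
  set B : ℤ := max (A + 1) (n₀ - L - K)
  set B' : ℤ := ⌊(1 + r) / 2 * n₀ + 3 / 2 * K⌋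
  refine ⟨Finset.Icc (-A) A ∪ Finset.Icc B B', ?_, fun y m hm hy => ?_⟩
  · have hcentral : ((Finset.Icc (-A) A).card : ℝ) ≤ 2 * (L + K + N) + 1 :=
      card_Icc_le (by positivity) (by rw [hA]; push_cast; linarith)
    have hreflected : ((Finset.Icc B B').card : ℝ) ≤ r * L + 3 * K + 1 := by
      refine card_Icc_le (by positivity) ?_
      have hfloor : (B' : ℝ) ≤ (1 + r) / 2 * n₀ + 3 / 2 * K := Int.floor_le _
      have hA' : ((A + 1 : ℤ) : ℝ) ≤ B := Int.cast_le.mpr (le_max_left _ _)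
      have hn' : ((n₀ - L - K : ℤ) : ℝ) ≤ B := Int.cast_le.mpr (le_max_right _ _)
      push_cast [hA] at hA' hn'
      rcases le_total (n₀ : ℝ) (2 * L) with _ | _ <;> nlinarith
    have hunion : ((Finset.Icc (-A) A ∪ Finset.Icc B B').card : ℝ) ≤
        (Finset.Icc (-A) A).card + (Finset.Icc B B').card := by
      exact_mod_cast Finset.card_union_le _ _
    linarith
  · rw [Finset.mem_union, not_or, Finset.mem_Icc, Finset.mem_Icc, ← abs_le, not_le] at hy
    obtain ⟨hcentral, hreflected⟩ := hy
    simp only [Int.dist_eq', ← Int.cast_natCast (R := ℝ), Int.cast_le]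
    refine ⟨by grind, fun hnear => ⟨by grind, ?_⟩⟩
    contrapose! hreflected
    refine ⟨by grind, Int.le_floor.mpr ?_⟩
    have hym : (y : ℝ) - m ≤ |y - m| := by exact_mod_cast le_abs_self (y - m)
    have hnear' : (y : ℝ) - (n₀ - m) ≤ K := by exact_mod_cast (le_abs_self _).trans hnear
    rw [abs_of_nonneg (by exact_mod_cast hn₀ : (0 : ℝ) ≤ n₀)] at hreflected
    push_cast at hreflected hym
    linarith

lemma exists_window {r : ℝ} (hr : 0 ≤ r) (hr' : r ≤ 1) (L K N : ℕ) (n₀ : ℤ) :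
    ∃ W : Finset ℤ, (W.card : ℝ) ≤ (2 + r) * L + (5 * K + 2 * N + 2) ∧
      ∀ y m : ℤ, |m| ≤ L → y ∉ W → K ≤ dist y m ∧ (dist y (n₀ - m) ≤ K →
        (N : ℤ) < |n₀| ∧ r * |(n₀ : ℝ)| + 2 * K ≤ dist y m) := by
  rcases le_total 0 n₀ with hn₀ | hn₀
  · exact exists_window_of_nonneg hr hr' L K N hn₀
  · obtain ⟨W, hcard, hW⟩ := exists_window_of_nonneg hr hr' L K N (neg_nonneg.mpr hn₀)
    have hdist : ∀ a b : ℤ, dist (-a) (-b) = dist a b := fun a b => by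
      rw [Int.dist_eq', Int.dist_eq', neg_sub_neg, abs_sub_comm]
    refine ⟨W.image (-·), by rwa [Finset.card_image_of_injective _ neg_injective],
      fun y m hm hy => ?_⟩
    have hy' : -y ∉ W := fun h => hy (Finset.mem_image.mpr ⟨-y, h, neg_neg y⟩)
    have h := hW (-y) (-m) (by rwa [abs_neg]) hy'
    rwa [← neg_sub', hdist, hdist, abs_neg, Int.cast_neg, abs_neg] at h

lemma exists_eventually_window (hlam : 1 < lam) (hα : IsDiophantineWith α σ κ) (hd : 0 ≤ d)
    (hdlog : d < log lam)
    (hrate : ∀ᶠ n : ℤ in cofinite, exp (-(d * |(n : ℝ)|)) ≤ chord (2 * θ + n * α)) {C : ℕ}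
    (hC : 1 ≤ C) {τ : ℝ} (hτ : 0 < τ) :
    ∃ c > 0, ∀ᶠ L : ℕ in atTop, ∃ W : Finset ℤ, (W.card : ℝ) ≤ (2 + d / log lam + τ) * L ∧
      ∀ {E φ m}, IsNormalizedEigenfunction lam α θ E φ m → |m| ≤ L →
        ∀ y : ℤ, |y| ≤ C * (L : ℤ) → y ∉ W → |φ y| ≤ exp (-c * L) := by
  have hlog : 0 < log lam := log_pos hlam
  obtain ⟨N, hN⟩ := exists_forall_lt_abs_of_eventually_cofinite hrate
  refine ⟨log lam * τ / 20, by positivity, ?_⟩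
  have hdecay := eventually_exists_hasDecayUpTo hlam hα θ
    (ε := log lam * τ / (20 * C)) (by positivity)
  have hlarge : ∀ᶠ L : ℕ in atTop, 2 * N + 7 ≤ τ / 2 * L :=
    (tendsto_natCast_atTop_atTop.const_mul_atTop (half_pos hτ)).eventually_ge_atTop _
  filter_upwards [(tendsto_id.const_mul_atTop' hC).eventually hdecay, hlarge]
    with L ⟨n₀, hdec⟩ hlarge
  set K := ⌈τ / 10 * L⌉₊
  have hKlow : τ / 10 * L ≤ K := Nat.le_ceil _
  have hKupp : (K : ℝ) < τ / 10 * L + 1 := Nat.ceil_lt_add_one (by positivity)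
  obtain ⟨W, hcard, hW⟩ := exists_window (r := d / log lam) (by positivity)
    ((div_le_one hlog).mpr hdlog.le) L K N n₀
  refine ⟨W, by linarith, fun {E φ m} hφ hm y hy hyW => ?_⟩
  obtain ⟨hym, hreflect⟩ := hW y m hm hyW
  have hmC : |m| ≤ ((C * L : ℕ) : ℤ) := hm.trans (by exact_mod_cast Nat.le_mul_of_pos_left L hC)
  refine (hdec.abs_le_of_tunnelling_cost hφ hmC (by exact_mod_cast hy) hlam.le hd hym
    fun hnear => ?_).trans (exp_le_exp.mpr ?_)
  · obtain ⟨hn₀, hcost⟩ := hreflect hnear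
    refine ⟨hN n₀ hn₀, le_trans (le_of_eq ?_) (mul_le_mul_of_nonneg_left hcost hlog.le)⟩
    field_simp
  · have hε : log lam * τ / (20 * C) * ((C * L : ℕ) : ℝ) = log lam * τ / 20 * L := by
      push_cast
      field_simp
    rw [id, hε]
    linarith [mul_le_mul_of_nonneg_left hKlow hlog.le]

lemma exists_eventually_window_forall (hlam : 1 < lam) (hα : IsDiophantineWith α σ κ) (hd : 0 ≤ d)
    (hdlog : d < log lam)
    (hrate : ∀ᶠ n : ℤ in cofinite, exp (-(d * |(n : ℝ)|)) ≤ chord (2 * θ + n * α)) {τ : ℝ}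
    (hτ : 0 < τ) :
    ∃ c > 0, ∀ᶠ L : ℕ in atTop, ∃ W : Finset ℤ, (W.card : ℝ) ≤ (2 + d / log lam + τ) * L ∧
      ∀ {E φ m}, IsNormalizedEigenfunction lam α θ E φ m → |m| ≤ L →
        ∀ y ∉ W, |φ y| ≤ exp (-c * (|(y : ℝ)| + L)) := by
  obtain ⟨c₁, hc₁, C, hC, hfar⟩ := exists_eventually_abs_le_far hlam hα hd hdlog hrate
  obtain ⟨c₂, hc₂, hnear⟩ := exists_eventually_window hlam hα hd hdlog hrate hC hτ
  refine ⟨min (c₁ / 2) (c₂ / (C + 1)), by positivity, ?_⟩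
  filter_upwards [hfar, hnear] with L hfar ⟨W, hcard, hW⟩
  refine ⟨W, hcard, fun {E φ m} hφ hm y hyW => ?_⟩
  rcases le_or_gt |y| (C * (L : ℤ)) with hy | hy
  · have hy' : |(y : ℝ)| ≤ C * L := by exact_mod_cast hy
    refine (hW hφ hm y hy hyW).trans (exp_le_exp.mpr ?_)
    rw [neg_mul, neg_mul, neg_le_neg_iff]
    calc min (c₁ / 2) (c₂ / (C + 1)) * (|(y : ℝ)| + L) ≤ c₂ / (C + 1) * (C * L + L) := by
          gcongr
          exact min_le_right _ _
      _ = c₂ * L := by field_simp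
  · have hy' : (L : ℝ) ≤ |(y : ℝ)| := by
      have : C * (L : ℝ) < |(y : ℝ)| := by exact_mod_cast hy
      nlinarith [(Nat.one_le_cast (α := ℝ)).mpr hC]
    refine (hfar hφ hm y hy).trans (exp_le_exp.mpr ?_)
    rw [neg_mul, neg_mul, neg_le_neg_iff]
    calc min (c₁ / 2) (c₂ / (C + 1)) * (|(y : ℝ)| + L) ≤ c₁ / 2 * (|(y : ℝ)| + |(y : ℝ)|) := by
          gcongr
          exact min_le_left _ _
      _ = c₁ * |(y : ℝ)| := by ring

end Window

/-! ### Counting orthonormal vectors concentrated on a window -/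

section Counting

variable {ι γ : Type*}

lemma hasSum_sq (v : lp (fun _ : γ => ℝ) 2) : HasSum (fun y => v y ^ 2) (‖v‖ ^ 2) := by
  simpa using lp.hasSum_norm (p := 2) (by norm_num) v

lemma sum_sq_apply_le_one {Φ : ι → lp (fun _ : γ => ℝ) 2} (hΦ : Orthonormal ℝ Φ) (F : Finset ι)
    (y : γ) : ∑ s ∈ F, Φ s y ^ 2 ≤ 1 := by
  classical
  have hbessel := hΦ.sum_inner_products_le (lp.single 2 y (1 : ℝ)) (s := F)
  rw [lp.norm_single two_pos] at hbessel
  simpa [lp.inner_single_right] using hbessel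

lemma mul_ncard_le_card_of_le_mass {Φ : ι → lp (fun _ : γ => ℝ) 2} (hΦ : Orthonormal ℝ Φ)
    {S : Set ι} {W : Finset γ} {c : ℝ} (hmass : ∀ s ∈ S, c ≤ ∑ y ∈ W, Φ s y ^ 2) :
    c * S.ncard ≤ W.card := by
  rcases S.finite_or_infinite with hS | hS
  · rw [Set.ncard_eq_toFinset_card S hS]
    calc c * hS.toFinset.card = hS.toFinset.card • c := by rw [nsmul_eq_mul, mul_comm]
      _ ≤ ∑ s ∈ hS.toFinset, ∑ y ∈ W, Φ s y ^ 2 :=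
        Finset.card_nsmul_le_sum _ _ _ fun s hs => hmass s (hS.mem_toFinset.mp hs)
      _ = ∑ y ∈ W, ∑ s ∈ hS.toFinset, Φ s y ^ 2 := Finset.sum_comm
      _ ≤ W.card • (1 : ℝ) := Finset.sum_le_card_nsmul _ _ _ fun y _ => sum_sq_apply_le_one hΦ _ y
      _ = W.card := by simp
  · simp [hS.ncard]

lemma sub_tsum_le_sum_of_le_off {f b : γ → ℝ} {a : ℝ} (hf : HasSum f a) (hb : Summable b)
    (hb0 : ∀ y, 0 ≤ b y) {W : Finset γ} (hle : ∀ y ∉ W, f y ≤ b y) :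
    a - ∑' y, b y ≤ ∑ y ∈ W, f y := by
  classical
  have hW : HasSum (fun y => if y ∈ W then f y else 0) (∑ y ∈ W, f y) := by
    simpa using hasSum_sum_of_ne_finset_zero (s := W) (f := fun y => if y ∈ W then f y else 0)
      fun y hy => if_neg hy
  refine sub_le_iff_le_add.mpr (hasSum_le (fun y => ?_) hf (hW.add hb.hasSum))
  by_cases hy : y ∈ W
  · simpa [hy] using hb0 y
  · simpa [hy] using hle y hy

end Counting

section Density

variable {lam α θ : ℝ}

lemma apply_ne_zero_of_forall_abs_le {γ : Type*} {f : γ → ℝ} {m : γ} (hf : f ≠ 0)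
    (hm : ∀ n, |f n| ≤ |f m|) : f m ≠ 0 := fun hzero =>
  hf (funext fun n => abs_nonpos_iff.mp (by simpa [hzero] using hm n))

lemma isNormalizedEigenfunction_div {E : ℝ} {φ : ℤ → ℝ} {m : ℤ}
    (hφ : IsEigenfunction (amoPot lam α θ) E φ) (hne : φ m ≠ 0) (hm : ∀ n, |φ n| ≤ |φ m|) :
    IsNormalizedEigenfunction lam α θ E (fun n => φ n / φ m) m where
  isEigenfunction n := by linear_combination (φ m)⁻¹ * hφ n
  abs_eq_one := by rw [div_self hne, abs_one]
  abs_le_one n := by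
    rw [abs_div]
    exact div_le_one_of_le₀ (hm n) (abs_nonneg _)

lemma sq_apply_le_of_decay {E c : ℝ} {v : lp (fun _ : ℤ => ℝ) 2} {m : ℤ} {L : ℕ} {W : Finset ℤ}
    (hv : ‖v‖ = 1) (hEv : IsEigenfunction (amoPot lam α θ) E (fun n => v n))
    (hm : ∀ n, |v n| ≤ |v m|)
    (hdecay : ∀ {φ}, IsNormalizedEigenfunction lam α θ E φ m →
      ∀ y ∉ W, |φ y| ≤ exp (-c * (|(y : ℝ)| + L))) {y : ℤ} (hy : y ∉ W) :
    v y ^ 2 ≤ exp (-(2 * c) * L) * exp (-(2 * c) * |(y : ℝ)|) := by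
  have hv0 : (v : ℤ → ℝ) ≠ 0 := fun h0 => by
    rw [lp.ext (g := 0) h0, norm_zero] at hv
    exact zero_ne_one hv
  have hpos : 0 < |v m| := abs_pos.mpr (apply_ne_zero_of_forall_abs_le hv0 hm)
  have hbound : |v y| ≤ exp (-c * (|(y : ℝ)| + L)) := by
    have hquot := hdecay (isNormalizedEigenfunction_div hEv (abs_pos.mp hpos) hm) y hy
    rw [abs_div, div_le_iff₀ hpos] at hquot
    exact hquot.trans (mul_le_of_le_one_right (exp_pos _).le
      (hv ▸ lp.norm_apply_le_norm two_ne_zero v m))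
  calc v y ^ 2 = |v y| ^ 2 := (sq_abs _).symm
    _ ≤ exp (-c * (|(y : ℝ)| + L)) ^ 2 := by gcongr
    _ = exp (-(2 * c) * L) * exp (-(2 * c) * |(y : ℝ)|) := by
      rw [← Real.exp_nat_mul, ← Real.exp_add]
      push_cast
      ring_nf

lemma eventually_exp_neg_mul_lt {c : ℝ} (hc : 0 < c) (S : ℝ) {ε : ℝ} (hε : 0 < ε) :
    ∀ᶠ L : ℕ in atTop, exp (-c * L) * S < ε := by
  have hexp : Tendsto (fun L : ℕ => exp (-c * L)) atTop (nhds 0) :=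
    tendsto_exp_atBot.comp (tendsto_natCast_atTop_atTop.const_mul_atTop_of_neg (neg_neg_of_pos hc))
  exact (hexp.mul_const S).eventually_lt_const (by rwa [zero_mul])

variable {ι : Type*} {Φ : ι → lp (fun _ : ℤ => ℝ) 2} {m : ι → ℤ}

lemma eventually_ncard_le {σ d τ : ℝ} {κ : ℕ} (hlam : 1 < lam) (hα : IsDiophantineWith α σ κ)
    (hd : 0 ≤ d) (hdlog : d < log lam)
    (hrate : ∀ᶠ n : ℤ in cofinite, exp (-(d * |(n : ℝ)|)) ≤ chord (2 * θ + n * α))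
    (hΦ : Orthonormal ℝ Φ)
    (heig : ∀ s, ∃ E, IsEigenfunction (amoPot lam α θ) E (fun n => Φ s n))
    (hm : ∀ s n, |Φ s n| ≤ |Φ s (m s)|) (hτ : 0 < τ) :
    ∀ᶠ L : ℕ in atTop, (Set.ncard {s | |m s| ≤ (L : ℤ)} : ℝ) ≤
      (1 + τ) * ((2 + d / log lam + τ) * L) := by
  obtain ⟨c, hc, hwindow⟩ := exists_eventually_window_forall hlam hα hd hdlog hrate hτ
  have hsum : Summable fun y : ℤ => exp (-(2 * c) * |(y : ℝ)|) :=
    summable_exp_neg_mul_abs (by positivity)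
  filter_upwards [hwindow, eventually_exp_neg_mul_lt (show 0 < 2 * c by positivity)
    (∑' y : ℤ, exp (-(2 * c) * |(y : ℝ)|)) (show 0 < τ / (1 + τ) by positivity)]
    with L ⟨W, hcard, hdecay⟩ htail
  have hmass : ∀ s ∈ {s | |m s| ≤ (L : ℤ)}, 1 / (1 + τ) ≤ ∑ y ∈ W, Φ s y ^ 2 := fun s hs => by
    obtain ⟨E, hE⟩ := heig s
    have hone : HasSum (fun y => Φ s y ^ 2) 1 := by simpa [hΦ.1 s] using hasSum_sq (Φ s)
    have hmass := sub_tsum_le_sum_of_le_off hone (hsum.mul_left (exp (-(2 * c) * L)))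
      (fun y => by positivity)
      (fun y hy => sq_apply_le_of_decay (hΦ.1 s) hE (hm s) (fun hφ => hdecay hφ hs) hy)
    rw [tsum_mul_left] at hmass
    calc 1 / (1 + τ) = 1 - τ / (1 + τ) := by field_simp; ring
      _ ≤ _ := by linarith
  have hcount := mul_ncard_le_card_of_le_mass hΦ hmass
  rw [one_div_mul_eq_div, div_le_iff₀' (by positivity)] at hcount
  exact hcount.trans (by gcongr)

lemma limsup_density_le (hlam : 1 < lam) (hα : IsDiophantine α)
    (hfin : IsBoundedUnder (· ≤ ·) cofinite (phaseRate α θ)) (hδ : deltaPhase α θ < log lam)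
    (hΦ : Orthonormal ℝ Φ)
    (heig : ∀ s, ∃ E, IsEigenfunction (amoPot lam α θ) E (fun n => Φ s n))
    (hm : ∀ s n, |Φ s n| ≤ |Φ s (m s)|) {τ : ℝ} (hτ : 0 < τ) :
    limsup (fun L : ℕ => (Set.ncard {s | |m s| ≤ (L : ℤ)} : ℝ) / (2 * L + 1)) atTop ≤
      (1 + τ) * (1 + deltaPhase α θ / (2 * log lam) + τ) := by
  have hlog : 0 < log lam := log_pos hlam
  have hδ0 := deltaPhase_nonneg hfin
  obtain ⟨σ, κ, hα⟩ := exists_isDiophantineWith hα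
  obtain ⟨d, hδd, hd⟩ := exists_between (show deltaPhase α θ <
    min (log lam) (deltaPhase α θ + τ * log lam) from lt_min hδ (by nlinarith [mul_pos hτ hlog]))
  obtain ⟨hdlog, hdδ⟩ := lt_min_iff.mp hd
  refine limsup_le_of_le (isCoboundedUnder_le_of_le atTop (x := 0) fun L => by positivity) ?_
  filter_upwards [eventually_ncard_le hlam hα (hδ0.trans hδd.le) hdlog
    (eventually_exp_neg_le_chord hα hfin hδd) hΦ heig hm hτ] with L hcount
  rw [div_le_iff₀ (by positivity)]
  have hdiv : d / log lam ≤ deltaPhase α θ / log lam + τ := by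
    rw [div_le_iff₀ hlog, add_mul, div_mul_cancel₀ _ hlog.ne']
    exact hdδ.le
  calc (Set.ncard {s | |m s| ≤ (L : ℤ)} : ℝ)
      ≤ (1 + τ) * ((2 + d / log lam + τ) * L) := hcount
    _ ≤ (1 + τ) * ((2 + (deltaPhase α θ / log lam + τ) + τ) * L) := by gcongr
    _ = (1 + τ) * (1 + deltaPhase α θ / (2 * log lam) + τ) * (2 * L) := by field_simp; ring
    _ ≤ (1 + τ) * (1 + deltaPhase α θ / (2 * log lam) + τ) * (2 * L + 1) := by
      gcongr
      exact (lt_add_one _).le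

end Density

end AlmostMathieu

open AlmostMathieu in
theorem amo_upper_density_bound_general {ι : Type*} [Nonempty ι]
    (lam α θ : ℝ) (hlam : 1 < lam) (hα : IsDiophantine α)
    (hδ : deltaPhase α θ < Real.log lam)
    (Φ : ι → lp (fun _ : ℤ => ℝ) 2) (hΦ : Orthonormal ℝ Φ)
    (heig : ∀ s, ∃ E : ℝ, IsEigenfunction (amoPot lam α θ) E (fun n => Φ s n))
    (m : ι → ℤ) (hm : ∀ s (n : ℤ), |Φ s n| ≤ |Φ s (m s)|) :
    limsup (fun L : ℕ => (Set.ncard {s | |m s| ≤ (L : ℤ)} : ℝ) / (2 * L + 1)) atTop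
      ≤ 1 + deltaPhase α θ / (2 * Real.log lam) := by
  obtain ⟨s₀⟩ := ‹Nonempty ι›
  obtain ⟨E, hE⟩ := heig s₀
  have hfin : IsBoundedUnder (· ≤ ·) cofinite (phaseRate α θ) :=
    isBoundedUnder_phaseRate (by linarith) hE (by simpa [hΦ.1 s₀] using hasSum_sq (Φ s₀))
  have hlim : Tendsto (fun τ : ℝ => (1 + τ) * (1 + deltaPhase α θ / (2 * Real.log lam) + τ))
      (nhdsWithin 0 (Set.Ioi 0)) (nhds (1 + deltaPhase α θ / (2 * Real.log lam))) :=
    tendsto_nhdsWithin_of_tendsto_nhds (Continuous.tendsto' (by fun_prop) _ _ (by simp))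
  exact ge_of_tendsto hlim (eventually_mem_nhdsWithin.mono fun τ hτ =>
    limsup_density_le hlam hα hfin hδ hΦ heig hm hτ)

theorem amo_upper_density_bound
    (lam α θ : ℝ) (hlam : 1 < lam) (hα : IsDiophantine α)
    (hδ : deltaPhase α θ < Real.log lam)
    (Φ : HilbertBasis ℕ ℝ (lp (fun _ : ℤ => ℝ) 2))
    (heig : ∀ s : ℕ, ∃ E : ℝ, IsEigenfunction (amoPot lam α θ) E (fun n => Φ s n))
    (m : ℕ → ℤ) (hm : ∀ (s : ℕ) (n : ℤ), |Φ s n| ≤ |Φ s (m s)|) :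
    limsup (fun L : ℕ => (Set.ncard {s : ℕ | |m s| ≤ (L : ℤ)} : ℝ) / (2 * L + 1)) atTop
      ≤ 1 + deltaPhase α θ / (2 * Real.log lam) :=
  amo_upper_density_bound_general lam α θ hlam hα hδ Φ Φ.orthonormal heig m hm
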